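/- Let G be a countably infinite discrete amenable group, X an infinite compact metrizable space, and α: G ↷ X a minimal free continuous action such that E_G(X) is compact and has covering dimension at most m in the weak* topology. If α has dynamical comparison, then α is m-almost finite. -/

import Mathlib

open MeasureTheory Set Pointwise

variable (G X : Type*)

section Defs

variable [Group G] [MetricSpace X] [MeasurableSpace X] [MulAction G X]

/-- A Borel probability measure is `G`-invariant. -/
def InvariantMeasure (μ : ProbabilityMeasure X) : Prop :=
  ∀ g : G, MeasureTheory.Measure.map (fun x => g • x) (μ : Measure X) = (μ : Measure X)

/-- `M_G(X)`: the set of `G`-invariant Borel probability measures on `X`. -/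
def MG : Set (ProbabilityMeasure X) := {μ | InvariantMeasure G X μ}

/-- `E_G(X)`: the set of ergodic `G`-invariant Borel probability measures on `X`,
i.e. invariant measures giving every `G`-invariant Borel set measure `0` or `1`. -/
def EG : Set (ProbabilityMeasure X) :=
  {μ | InvariantMeasure G X μ ∧
    ∀ A : Set X, MeasurableSet A → (∀ g : G, g • A = A) → μ A = 0 ∨ μ A = 1}

/-- The action of `G` on `X` is free. -/
def FreeAction : Prop := ∀ (g : G) (x : X), g • x = x → g = 1

/-- The action of `G` on `X` is minimal: there is no proper nonempty closed invariant subset. -/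
def MinimalAction : Prop :=
  ∀ C : Set X, IsClosed C → (∀ g : G, g • C ⊆ C) → C = ∅ ∨ C = Set.univ

/-- The small boundary property. -/
def SmallBoundaryProperty : Prop :=
  ∀ (x : X) (U : Set X), IsOpen U → x ∈ U →
    ∃ V : Set X, IsOpen V ∧ x ∈ V ∧ V ⊆ U ∧ ∀ μ ∈ MG G X, μ (frontier V) = 0

/-- `S` is a `(K,δ)`-invariant finite subset of `G`. -/
def FolnerInv (K : Finset G) (δ : ℝ) (S : Finset G) : Prop :=
  (1 - δ) * (S.card : ℝ) ≤ ({s | s ∈ S ∧ ∀ k ∈ K, k * s ∈ S} : Set G).ncard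

/-- `G` is amenable: it admits `(K,δ)`-invariant nonempty finite subsets for all `K, δ`. -/
def AmenableGroup : Prop :=
  ∀ (K : Finset G) (δ : ℝ), 0 < δ → ∃ S : Finset G, S.Nonempty ∧ FolnerInv G K δ S

/-- `(S, V)` is a tower: the translates `s • V`, `s ∈ S`, are pairwise disjoint. -/
def IsTower (S : Finset G) (V : Set X) : Prop :=
  (S : Set G).Pairwise fun s t => Disjoint (s • V) (t • V)

/-- `F ≺_m O`: subordination with `m`-colored multiplicity. -/
def SubordinateM (m : ℕ) (F O : Set X) : Prop :=
  ∃ (n : ℕ) (U : Fin n → Set X) (s : Fin n → G) (c : Fin n → Fin (m + 1)),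
    (∀ k, IsOpen (U k)) ∧ F ⊆ ⋃ k, U k ∧ (∀ k, s k • U k ⊆ O) ∧
    ∀ k l, k ≠ l → c k = c l → Disjoint (s k • U k) (s l • U l)

/-- The action has dynamical `m`-comparison. -/
def HasMComparison (m : ℕ) : Prop :=
  ∀ F O : Set X, IsClosed F → IsOpen O →
    (∀ μ ∈ MG G X, μ F < μ O) → SubordinateM G X m F O

/-- The action is `m`-almost finite. -/
def MAlmostFinite (m : ℕ) : Prop :=
  ∀ (n : ℕ), 1 ≤ n → ∀ (K : Finset G) (δ : ℝ), 0 < δ →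
    ∃ (I : ℕ) (S : Fin I → Finset G) (V : Fin I → Set X) (c : Fin I → Fin (m + 1))
      (S' : Fin I → Finset G),
      (∀ i, IsOpen (V i)) ∧
      (∀ i, IsTower G X (S i) (closure (V i))) ∧
      (∀ i, FolnerInv G K δ (S i)) ∧
      (∀ i, ∀ s ∈ S i, Metric.diam (s • closure (V i)) < δ) ∧
      (∀ i j, i ≠ j → c i = c j →
        Disjoint ((S i : Set G) • closure (V i)) ((S j : Set G) • closure (V j))) ∧
      (∀ i, S' i ⊆ S i) ∧ (∀ i, ((S' i).card : ℝ) ≤ (S i).card / n) ∧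
      SubordinateM G X 0 (Set.univ \ ⋃ i, (S i : Set G) • V i) (⋃ i, (S' i : Set G) • V i)

end Defs

/-- Covering dimension of a topological space is at most `m`: every finite open cover has a
finite open refinement covering the space in which no point lies in more than `m+1` members. -/
def CovDimLE (Y : Type*) [TopologicalSpace Y] (m : ℕ) : Prop :=
  ∀ (n : ℕ) (U : Fin n → Set Y), (∀ i, IsOpen (U i)) → (⋃ i, U i) = Set.univ →
    ∃ (k : ℕ) (W : Fin k → Set Y), (∀ j, IsOpen (W j)) ∧ (⋃ j, W j) = Set.univ ∧
      (∀ j, ∃ i, W j ⊆ U i) ∧ ∀ y : Y, ({j | y ∈ W j} : Set (Fin k)).ncard ≤ m + 1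

open MeasureTheory Set Pointwise

section Part1
set_option linter.unusedSectionVars false

variable {G X : Type*} [Group G] [MetricSpace X] [MeasurableSpace X] [MulAction G X]

/-- Pointwise castle condition. -/
def Castle {ι : Type} (S : ι → Finset G) (V : ι → Set X) : Prop :=
  ∀ i j, ∀ s ∈ S i, ∀ t ∈ S j, ∀ x ∈ V i, ∀ y ∈ V j, s • x = t • y → i = j ∧ s = t

/-- The set covered by a castle. -/
def cov {ι : Type} (S : ι → Finset G) (V : ι → Set X) : Set X :=
  ⋃ i, ⋃ s ∈ S i, s • V i

theorem mem_cov {ι : Type} {S : ι → Finset G} {V : ι → Set X} {z : X} :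
    z ∈ cov S V ↔ ∃ i, ∃ s ∈ S i, ∃ x ∈ V i, s • x = z := by
  simp [cov, Set.mem_smul_set]

theorem cov_sum {ι κ : Type} (S : ι → Finset G) (V : ι → Set X) (S' : κ → Finset G)
    (V' : κ → Set X) : cov (Sum.elim S S') (Sum.elim V V') = cov S V ∪ cov S' V' := by
  ext z
  simp [mem_cov]

theorem castle_sum {ι κ : Type} {S : ι → Finset G} {V : ι → Set X} {S' : κ → Finset G}
    {V' : κ → Set X} (h : Castle S V) (h' : Castle S' V') (hd : Disjoint (cov S V) (cov S' V')) :
    Castle (Sum.elim S S') (Sum.elim V V') := by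
  rw [Set.disjoint_left] at hd
  rintro (i | i) (j | j) s hs t ht x hx y hy e <;> simp only [Sum.elim_inl, Sum.elim_inr] at *
  · have := h i j s hs t ht x hx y hy e
    simpa using this
  · exact absurd (mem_cov.2 ⟨j, t, ht, y, hy, e.symm⟩) (hd (mem_cov.2 ⟨i, s, hs, x, hx, rfl⟩))
  · exact absurd (mem_cov.2 ⟨i, s, hs, x, hx, e⟩) (hd (mem_cov.2 ⟨j, t, ht, y, hy, rfl⟩))
  · have := h' i j s hs t ht x hx y hy e
    simpa using this

variable [BorelSpace X] [ContinuousConstSMul G X]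

theorem inv_smul_meas {μ : Measure X} (h : ∀ g : G, Measure.map (fun x => g • x) μ = μ) (g : G)
    (A : Set X) : μ (g • A) = μ A := by
  have : SMulInvariantMeasure G X μ := ⟨fun c s hs => by
    conv_rhs => rw [← h c]
    rw [Measure.map_apply (measurable_const_smul c) hs]⟩
  exact measure_smul μ g A

theorem inv_smul_real {μ : Measure X} (h : ∀ g : G, Measure.map (fun x => g • x) μ = μ) (g : G)
    (A : Set X) : μ.real (g • A) = μ.real A := by
  simp [Measure.real, inv_smul_meas h]

theorem measurableSet_cov {ι : Type} [Finite ι] {S : ι → Finset G} {V : ι → Set X}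
    (hV : ∀ i, MeasurableSet (V i)) : MeasurableSet (cov S V) :=
  MeasurableSet.iUnion fun i => Finset.measurableSet_biUnion _ fun s _ => (hV i).const_smul s

theorem measure_cov {ι : Type} [Fintype ι] {S : ι → Finset G} {V : ι → Set X}
    (hV : ∀ i, MeasurableSet (V i)) (hc : Castle S V) {μ : Measure X} [IsProbabilityMeasure μ]
    (h : ∀ g : G, Measure.map (fun x => g • x) μ = μ) :
    μ.real (cov S V) = ∑ i, (S i).card * μ.real (V i) := by
  unfold cov
  rw [measureReal_iUnion_fintype (h' := fun i => measure_ne_top μ _)]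
  · refine Finset.sum_congr rfl fun i _ => ?_
    rw [measureReal_biUnion_finset]
    · simp [inv_smul_real h]
    · intro s hs t ht hst
      refine Set.disjoint_left.2 ?_
      rintro _ ⟨x, hx, rfl⟩ ⟨y, hy, e⟩
      exact hst (hc i i s hs t ht x hx y hy e.symm).2
    · exact fun s _ => (hV i).const_smul s
  · intro i j hij
    refine Set.disjoint_left.2 ?_
    intro z hz hz'
    simp only [mem_iUnion, Set.mem_smul_set] at hz hz'
    obtain ⟨s, hs, x, hx, e⟩ := hz
    obtain ⟨t, ht, y, hy, e'⟩ := hz'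
    exact hij (hc i j s hs t ht x hx y hy (e.trans e'.symm)).1
  · exact fun i => Finset.measurableSet_biUnion _ fun s _ => (hV i).const_smul s

open Classical in
theorem oneColor (D0 B : Set X) (hD0 : MeasurableSet D0) (hB : MeasurableSet B) (F : Finset G)
    (ε : ℝ) (hε1 : ε < 1)
    (hsep : ∀ x ∈ B, ∀ y ∈ B, ∀ f ∈ F, ∀ f' ∈ F, f • x = f' • y → f = f') :
    ∃ (ι : Type) (_ : Fintype ι) (S : ι → Finset G) (V : ι → Set X),
      (∀ i, MeasurableSet (V i)) ∧ Castle S V ∧ Disjoint D0 (cov S V) ∧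
      (∀ i, S i ⊆ F) ∧ (∀ i, (1 - ε) * F.card ≤ (S i).card) ∧
      (∀ i, ∀ f ∈ F, ∀ x ∈ V i, f • x ∈ D0 ∪ cov S V) ∧
      (∀ x ∈ B, ε * F.card ≤ (F.filter fun f => f • x ∈ D0 ∪ cov S V).card) := by
  let e := (F.powerset.filter fun T => (1 - ε) * F.card ≤ (T.card : ℝ)).equivFin
  set n := (F.powerset.filter fun T => (1 - ε) * F.card ≤ (T.card : ℝ)).card
  let S : Fin n → Finset G := fun i => (e.symm i).1
  let V : Fin n → Set X := fun i => {x ∈ B | ∀ f ∈ F, f • x ∈ D0 ↔ f ∉ S i}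
  have hS : ∀ i, S i ⊆ F ∧ (1 - ε) * F.card ≤ ((S i).card : ℝ) := fun i => by
    have := Finset.mem_filter.1 (e.symm i).2
    exact ⟨Finset.mem_powerset.1 this.1, this.2⟩
  have key : ∀ i, ∀ f ∈ F, ∀ x ∈ V i, f • x ∈ D0 ∪ cov S V := by
    intro i f hf x hx
    by_cases h : f ∈ S i
    · exact Or.inr (mem_cov.2 ⟨i, f, h, x, hx, rfl⟩)
    · exact Or.inl ((hx.2 f hf).2 h)
  refine ⟨Fin n, inferInstance, S, V, ?_, ?_, ?_, fun i => (hS i).1, fun i => (hS i).2, key, ?_⟩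
  · intro i
    have : V i = B ∩ ⋂ f ∈ F, {x | f • x ∈ D0 ↔ f ∉ S i} := by
      ext x; simp [V]
    rw [this]
    refine hB.inter (Finset.measurableSet_biInter _ fun f _ => ?_)
    by_cases h : f ∈ S i
    · have h2 := ((measurable_const_smul f) hD0).compl
      have h3 : {x | f • x ∈ D0 ↔ f ∉ S i} = ((fun x : X => f • x) ⁻¹' D0)ᶜ := by ext x; simp [h]
      rw [h3]; exact h2
    · have h2 := (measurable_const_smul f) hD0
      have h3 : {x | f • x ∈ D0 ↔ f ∉ S i} = ((fun x : X => f • x) ⁻¹' D0) := by ext x; simp [h]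
      rw [h3]; exact h2
  · intro i j s hs t ht x hx y hy e'
    have h1 := hsep x hx.1 y hy.1 s ((hS i).1 hs) t ((hS j).1 ht) e'
    refine ⟨?_, h1⟩
    subst h1
    have hxy : x = y := smul_left_cancel s e'
    subst hxy
    have : S i = S j := by
      ext f
      constructor
      · intro hf
        have hfF := (hS i).1 hf
        have a := hx.2 f hfF
        have b := hy.2 f hfF
        tauto
      · intro hf
        have hfF := (hS j).1 hf
        have a := hx.2 f hfF
        have b := hy.2 f hfF
        tauto
    exact e.symm.injective (Subtype.ext this)
  · refine Set.disjoint_left.2 fun z hz hz' => ?_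
    obtain ⟨i, s, hs, x, hx, rfl⟩ := mem_cov.1 hz'
    exact (hx.2 s ((hS i).1 hs)).1 hz hs
  · intro x hx
    by_cases h : ε * F.card ≤ (F.filter fun f => f • x ∈ D0).card
    · refine h.trans ?_
      exact_mod_cast Finset.card_le_card (Finset.monotone_filter_right _ fun f _ hf => Or.inl hf)
    · push Not at h
      let T := F.filter fun f => f • x ∉ D0
      have hc : (F.filter fun f => f • x ∈ D0).card + T.card = F.card :=
        Finset.card_filter_add_card_filter_not _
      have hT : T ∈ F.powerset.filter fun T => (1 - ε) * F.card ≤ (T.card : ℝ) := by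
        simp only [Finset.mem_filter, Finset.mem_powerset]
        refine ⟨Finset.filter_subset _ _, ?_⟩
        have : ((F.filter fun f => f • x ∈ D0).card : ℝ) + T.card = F.card := by exact_mod_cast hc
        linarith
      have hx' : x ∈ V (e ⟨T, hT⟩) := by
        refine ⟨hx, fun f hf => ?_⟩
        simp [S, T, hf]
      have : (F.filter fun f => f • x ∈ D0 ∪ cov S V) = F :=
        Finset.filter_true_of_mem fun f hf => key _ f hf x hx'
      rw [this]
      nlinarith [(Nat.cast_nonneg F.card : (0:ℝ) ≤ F.card)]

open Classical in
theorem manyColor (D0 : Set X) (hD0 : MeasurableSet D0) (F : Finset G)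
    (ε : ℝ) (hε1 : ε < 1) (B : ℕ → Set X) (hB : ∀ n, MeasurableSet (B n))
    (hsep : ∀ n, ∀ x ∈ B n, ∀ y ∈ B n, ∀ f ∈ F, ∀ f' ∈ F, f • x = f' • y → f = f') (N : ℕ) :
    ∃ (ι : Type) (_ : Fintype ι) (S : ι → Finset G) (V : ι → Set X),
      (∀ i, MeasurableSet (V i)) ∧ Castle S V ∧ Disjoint D0 (cov S V) ∧
      (∀ i, S i ⊆ F) ∧ (∀ i, (1 - ε) * F.card ≤ (S i).card) ∧
      (∀ i, ∀ f ∈ F, ∀ x ∈ V i, f • x ∈ D0 ∪ cov S V) ∧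
      (∀ n < N, ∀ x ∈ B n, ε * F.card ≤ (F.filter fun f => f • x ∈ D0 ∪ cov S V).card) := by
  induction N with
  | zero =>
    refine ⟨Empty, inferInstance, Empty.elim, Empty.elim, nofun, nofun, ?_, nofun, nofun, nofun,
      fun n hn => absurd hn (by omega)⟩
    simp [cov]
  | succ N ih =>
    obtain ⟨ι, _, S, V, hV, hC, hd, hS, hS', h1, h2⟩ := ih
    obtain ⟨κ, _, T, W, gV, gC, gd, gS, gS', g1, g2⟩ := oneColor (D0 ∪ cov S V) (B N)
      (hD0.union (measurableSet_cov hV)) (hB N) F ε hε1 (hsep N)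
    rw [Set.disjoint_union_left] at gd
    refine ⟨ι ⊕ κ, inferInstance, Sum.elim S T, Sum.elim V W, ?_, castle_sum hC gC gd.2, ?_, ?_,
      ?_, ?_, ?_⟩
    · rintro (i | i); exacts [hV i, gV i]
    · rw [cov_sum, Set.disjoint_union_right]; exact ⟨hd, gd.1⟩
    · rintro (i | i); exacts [hS i, gS i]
    · rintro (i | i); exacts [hS' i, gS' i]
    · rw [cov_sum, ← Set.union_assoc]
      rintro (i | i) f hf x hx
      exacts [Or.inl (h1 i f hf x hx), g1 i f hf x hx]
    · simp only [cov_sum, ← Set.union_assoc]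
      intro n hn x hx
      rcases Nat.lt_succ_iff_lt_or_eq.1 hn with h | h
      · refine (h2 n h x hx).trans ?_
        exact_mod_cast Finset.card_le_card (Finset.monotone_filter_right _ fun f _ hf => Or.inl hf)
      · subst h
        convert g2 x hx

variable [CompactSpace X]

theorem exists_sep (hfree : FreeAction G X) (F : Finset G) :
    ∃ (N : ℕ) (B : ℕ → Set X), (∀ n, MeasurableSet (B n)) ∧
      (∀ n, ∀ x ∈ B n, ∀ y ∈ B n, ∀ f ∈ F, ∀ f' ∈ F, f • x = f' • y → f = f') ∧
      ∀ x, ∃ n < N, x ∈ B n := by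
  classical
  have hloc : ∀ x : X, ∃ U : Set X, IsOpen U ∧ x ∈ U ∧
      ∀ y ∈ U, ∀ z ∈ U, ∀ f ∈ F, ∀ f' ∈ F, f • y = f' • z → f = f' := by
    intro x
    have : ∀ᶠ p : X × X in nhds (x, x), ∀ q ∈ F ×ˢ F, q.1 • p.1 = q.2 • p.2 → q.1 = q.2 := by
      rw [Filter.eventually_all_finset]
      rintro ⟨f, f'⟩ -
      by_cases h : f = f'
      · exact Filter.Eventually.of_forall fun _ _ => h
      · have hne : f • x ≠ f' • x := fun e => h (by
          have := hfree (f'⁻¹ * f) x (by rw [mul_smul, e, inv_smul_smul])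
          exact (inv_mul_eq_one.1 this).symm)
        have ho : IsOpen {p : X × X | f • p.1 ≠ f' • p.2} :=
          isOpen_ne_fun (by fun_prop) (by fun_prop)
        filter_upwards [ho.mem_nhds hne] with p hp e using absurd e hp
    rw [nhds_prod_eq, Filter.eventually_prod_self_iff'] at this
    obtain ⟨t, ht, h⟩ := this
    obtain ⟨U, hU, hUo, hxU⟩ := mem_nhds_iff.1 ht
    exact ⟨U, hUo, hxU, fun y hy z hz f hf f' hf' e =>
      h y (hU hy) z (hU hz) (f, f') (Finset.mk_mem_product hf hf') e⟩
  choose U hUo hxU hU using hloc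
  obtain ⟨t, ht⟩ := isCompact_univ.elim_finite_subcover U hUo
    (fun x _ => mem_iUnion.2 ⟨x, hxU x⟩)
  let e := t.equivFin
  refine ⟨t.card, fun n => if h : n < t.card then U (e.symm ⟨n, h⟩).1 else ∅, ?_, ?_, ?_⟩
  · intro n
    dsimp only
    split_ifs
    exacts [(hUo _).measurableSet, MeasurableSet.empty]
  · intro n x hx y hy
    dsimp only at hx hy
    split_ifs at hx hy with h
    · exact hU _ x hx y hy
    · exact absurd hx (by simp)
  · intro x
    obtain ⟨i, hi, hx⟩ := mem_iUnion₂.1 (ht (mem_univ x))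
    refine ⟨e ⟨i, hi⟩, (e ⟨i, hi⟩).2, ?_⟩
    simp [hx]

end Part1

open MeasureTheory Set Pointwise

section Part2
set_option linter.unusedSectionVars false

variable {G X : Type*} [Group G] [MetricSpace X] [MeasurableSpace X] [MulAction G X]
  [BorelSpace X] [ContinuousConstSMul G X] [CompactSpace X]

open Classical in
/-- Double counting. -/
theorem count_le {μ : Measure X} [IsProbabilityMeasure μ]
    (h : ∀ g : G, Measure.map (fun x => g • x) μ = μ) (F : Finset G) (hF : F.Nonempty)
    (A R : Set X) (hA : MeasurableSet A) (hR : MeasurableSet R) (ε : ℝ)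
    (hc : ∀ x ∈ R, ε * F.card ≤ (F.filter fun f => f • x ∈ A).card) :
    ε * μ.real R ≤ μ.real A := by
  have hF' : (0:ℝ) < F.card := by exact_mod_cast hF.card_pos
  have hpre : ∀ f : G, MeasurableSet ((fun x : X => f • x) ⁻¹' A) :=
    fun f => measurable_const_smul f hA
  have h1 : ∀ f : G, μ.real ((fun x : X => f • x) ⁻¹' A) = μ.real A := by
    intro f
    rw [Measure.real, Measure.real, ← Measure.map_apply (measurable_const_smul f) hA, h f]
  have h2 : ∫ x, R.indicator (fun _ => ε * F.card) x ∂μ ≤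
      ∫ x, ∑ f ∈ F, ((fun x : X => f • x) ⁻¹' A).indicator (fun _ => (1:ℝ)) x ∂μ := by
    apply integral_mono
    · exact (integrable_const _).indicator hR
    · exact integrable_finset_sum _ fun f _ => (integrable_const _).indicator (hpre f)
    · intro x
      dsimp only
      have e : ∑ f ∈ F, ((fun x : X => f • x) ⁻¹' A).indicator (fun _ => (1:ℝ)) x =
          (F.filter fun f => f • x ∈ A).card := by
        simp [Set.indicator_apply]
      rw [e]
      by_cases hx : x ∈ R
      · simpa [hx] using hc x hx
      · simp [hx]
  rw [integral_indicator_const _ hR, integral_finset_sum _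
    (fun f _ => (integrable_const _).indicator (hpre f))] at h2
  simp only [integral_indicator_const _ (hpre _), h1, smul_eq_mul, mul_one, Finset.sum_const,
    nsmul_eq_mul] at h2
  have : F.card * (ε * μ.real R) ≤ F.card * μ.real A := by linarith
  exact le_of_mul_le_mul_left this hF'

theorem owInduct (hfree : FreeAction G X) (ε : ℝ) (hε : 0 < ε) (hε1 : ε < 1)
    (Good : Finset G → Prop)
    (hGood : ∀ (L : Finset G) (β : ℝ), 0 < β → ∃ F : Finset G, F.Nonempty ∧ Good F ∧
      FolnerInv G L β F) (n : ℕ) : ∀ (L : Finset G) (β : ℝ), 0 < β →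
    ∃ (ι : Type) (_ : Fintype ι) (S : ι → Finset G) (V : ι → Set X),
      (∀ i, MeasurableSet (V i)) ∧ Castle S V ∧
      (∀ i, ∃ F, Good F ∧ S i ⊆ F ∧ (1 - ε) * F.card ≤ (S i).card) ∧
      ∀ μ : Measure X, IsProbabilityMeasure μ → (∀ g : G, Measure.map (fun x => g • x) μ = μ) →
        μ.real (cov S V)ᶜ ≤ (1 - ε) ^ n + β ∧
        μ.real {x | x ∉ cov S V ∧ ∃ l ∈ L, l • x ∈ cov S V} ≤ β := by
  classical
  induction n with
  | zero =>
    intro L β hβ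
    refine ⟨Empty, inferInstance, Empty.elim, Empty.elim, nofun, nofun, nofun, fun μ _ h => ?_⟩
    simp [cov, hβ.le]
  | succ n ih =>
    intro L β hβ
    obtain ⟨F, hFne, hFg, hFi⟩ := hGood (L.image fun l => l⁻¹) (β * (1 - ε) / (2 * (L.card + 1)))
      (div_pos (mul_pos hβ (by linarith)) (by positivity))
    obtain ⟨ι, _, S, V, hV, hC, hS, hμ⟩ := ih (L ∪ F) (β / 2) (by linarith)
    obtain ⟨N, B, hB, hBsep, hBc⟩ := exists_sep hfree F
    obtain ⟨κ, _, T, W, gV, gC, gd, gS, gS', g1, g2⟩ :=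
      manyColor (cov S V) (measurableSet_cov hV) F ε hε1 B hB hBsep N
    refine ⟨ι ⊕ κ, inferInstance, Sum.elim S T, Sum.elim V W, ?_, castle_sum hC gC gd, ?_, ?_⟩
    · rintro (i | i); exacts [hV i, gV i]
    · rintro (i | i); exacts [hS i, ⟨F, hFg, gS i, gS' i⟩]
    · intro μ _ hinv
      obtain ⟨m1, m2⟩ := hμ μ inferInstance hinv
      rw [cov_sum]
      have mS : MeasurableSet (cov S V) := measurableSet_cov hV
      have mT : MeasurableSet (cov T W) := measurableSet_cov gV
      have mBad : MeasurableSet {x | x ∉ cov S V ∧ ∃ l ∈ L ∪ F, l • x ∈ cov S V} := by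
        have : {x | x ∉ cov S V ∧ ∃ l ∈ L ∪ F, l • x ∈ cov S V} =
            (cov S V)ᶜ ∩ ⋃ l ∈ L ∪ F, (fun x : X => l • x) ⁻¹' (cov S V) := by
          ext x; simp
        rw [this]
        exact mS.compl.inter (Finset.measurableSet_biUnion _ fun l _ => measurable_const_smul l mS)
      set Bad := {x | x ∉ cov S V ∧ ∃ l ∈ L ∪ F, l • x ∈ cov S V} with hBad
      constructor
      · have k1 : ε * μ.real ((cov S V)ᶜ \ Bad) ≤ μ.real (cov T W) := by
          refine count_le hinv F hFne _ _ mT (mS.compl.diff mBad) ε ?_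
          rintro x ⟨hx1, hx2⟩
          obtain ⟨k, hk, hxk⟩ := hBc x
          refine (g2 k hk x hxk).trans ?_
          norm_cast
          refine Finset.card_le_card fun f hf => ?_
          simp only [Finset.mem_filter, mem_union] at hf ⊢
          refine ⟨hf.1, hf.2.resolve_left fun h => hx2 ⟨hx1, f, by simp [hf.1], h⟩⟩
        have k2 : μ.real (cov S V)ᶜ ≤ μ.real ((cov S V)ᶜ \ Bad) + μ.real Bad := by
          refine (measureReal_mono ?_).trans (measureReal_union_le _ _)
          intro x hx
          by_cases h : x ∈ Bad
          exacts [Or.inr h, Or.inl ⟨hx, h⟩]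
        have k3 : μ.real (cov S V ∪ cov T W)ᶜ = μ.real (cov S V)ᶜ - μ.real (cov T W) := by
          rw [probReal_compl_eq_one_sub (mS.union mT), probReal_compl_eq_one_sub mS,
            measureReal_union gd mT]
          ring
        rw [k3, pow_succ]
        nlinarith
      · set Z := L.biUnion fun l => (F.filter fun f => l⁻¹ * f ∉ F).image fun f => l⁻¹ * f
        have sub : {x | x ∉ cov S V ∪ cov T W ∧ ∃ l ∈ L, l • x ∈ cov S V ∪ cov T W} ⊆
            Bad ∪ ⋃ l ∈ L, ⋃ f ∈ F.filter (fun f => l⁻¹ * f ∉ F), ⋃ i, (l⁻¹ * f) • W i := by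
          rintro x ⟨hx, l, hl, h | h⟩
          · exact Or.inl ⟨fun h' => hx (Or.inl h'), l, by simp [hl], h⟩
          · right
            obtain ⟨i, f, hf, w, hw, e⟩ := mem_cov.1 h
            have e' : (l⁻¹ * f) • w = x := by rw [mul_smul, e, inv_smul_smul]
            simp only [mem_iUnion, Finset.mem_filter]
            refine ⟨l, hl, f, ⟨gS i hf, fun hh => hx ?_⟩, i, ⟨w, hw, e'⟩⟩
            rw [← e']
            exact g1 i _ hh w hw
        have hcard : ∀ l ∈ L, ((F.filter fun f => l⁻¹ * f ∉ F).card : ℝ) ≤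
            β * (1 - ε) / (2 * (L.card + 1)) * F.card := by
          intro l hl
          unfold FolnerInv at hFi
          have e1 : ({s | s ∈ F ∧ ∀ k ∈ L.image fun l => l⁻¹, k * s ∈ F} : Set G) =
              ((F.filter fun s => ∀ k ∈ L.image fun l => l⁻¹, k * s ∈ F : Finset G) : Set G) := by
            ext; simp
          rw [e1, Set.ncard_coe_finset] at hFi
          have e2 := Finset.card_filter_add_card_filter_not (s := F)
            (fun f => l⁻¹ * f ∈ F)
          have e3 : (F.filter fun s => ∀ k ∈ L.image fun l => l⁻¹, k * s ∈ F).card ≤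
              (F.filter fun f => l⁻¹ * f ∈ F).card := by
            refine Finset.card_le_card fun f hf => ?_
            simp only [Finset.mem_filter] at hf ⊢
            exact ⟨hf.1, hf.2 _ (Finset.mem_image_of_mem _ hl)⟩
          have e2' : ((F.filter fun f => l⁻¹ * f ∈ F).card : ℝ) +
            (F.filter fun f => l⁻¹ * f ∉ F).card = F.card := by exact_mod_cast e2
          have e3' : ((F.filter fun s => ∀ k ∈ L.image fun l => l⁻¹, k * s ∈ F).card : ℝ) ≤
              (F.filter fun f => l⁻¹ * f ∈ F).card := by exact_mod_cast e3
          linarith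
        have hsum : (1 - ε) * F.card * ∑ i, μ.real (W i) ≤ 1 := by
          have := measure_cov gV gC hinv
          have l1 : μ.real (cov T W) ≤ 1 := measureReal_le_one
          rw [this] at l1
          refine le_trans ?_ l1
          rw [Finset.mul_sum]
          exact Finset.sum_le_sum fun i _ => mul_le_mul_of_nonneg_right (gS' i) measureReal_nonneg
        have hsn : 0 ≤ ∑ i, μ.real (W i) := Finset.sum_nonneg fun i _ => measureReal_nonneg
        have b1 : μ.real (⋃ l ∈ L, ⋃ f ∈ F.filter (fun f => l⁻¹ * f ∉ F), ⋃ i, (l⁻¹ * f) • W i) ≤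
            ∑ l ∈ L, ∑ f ∈ F.filter (fun f => l⁻¹ * f ∉ F), ∑ i, μ.real (W i) := by
          refine (measureReal_biUnion_finset_le _ _).trans (Finset.sum_le_sum fun l _ => ?_)
          refine (measureReal_biUnion_finset_le _ _).trans (Finset.sum_le_sum fun f _ => ?_)
          refine (measureReal_iUnion_fintype_le _).trans (Finset.sum_le_sum fun i _ => ?_)
          rw [inv_smul_real hinv]
        have b2 : ∑ l ∈ L, ∑ f ∈ F.filter (fun f => l⁻¹ * f ∉ F), ∑ i, μ.real (W i) ≤
            ∑ l ∈ L, β / (2 * (L.card + 1)) := by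
          refine Finset.sum_le_sum fun l hl => ?_
          rw [Finset.sum_const, nsmul_eq_mul]
          calc _ ≤ β * (1 - ε) / (2 * (L.card + 1)) * F.card * ∑ i, μ.real (W i) :=
                mul_le_mul_of_nonneg_right (hcard l hl) hsn
            _ = β / (2 * (L.card + 1)) * ((1 - ε) * F.card * ∑ i, μ.real (W i)) := by ring
            _ ≤ β / (2 * (L.card + 1)) * 1 := by gcongr
            _ = _ := mul_one _
        have b3 : ∑ l ∈ L, β / (2 * ((L.card : ℝ) + 1)) ≤ β / 2 := by
          rw [Finset.sum_const, nsmul_eq_mul]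
          have : (0:ℝ) ≤ L.card := Nat.cast_nonneg _
          rw [mul_div_assoc', div_le_div_iff₀ (by positivity) (by positivity)]
          nlinarith
        calc _ ≤ _ := measureReal_mono sub
          _ ≤ _ := measureReal_union_le _ _
          _ ≤ β / 2 + β / 2 := add_le_add m2 (b1.trans (b2.trans b3))
          _ = β := by ring

theorem folner_sub [DecidableEq G] (K : Finset G) (δ ε : ℝ) (hδ : 0 < δ)
    (hεK : ε * (2 + K.card) ≤ δ)
    (F S : Finset G) (hF : FolnerInv G K ε F) (hSF : S ⊆ F) (hS : (1 - ε) * F.card ≤ S.card) :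
    FolnerInv G K δ S := by
  classical
  unfold FolnerInv at *
  have e1 : ∀ F : Finset G, ({s | s ∈ F ∧ ∀ k ∈ K, k * s ∈ F} : Set G) =
      ((F.filter fun s => ∀ k ∈ K, k * s ∈ F : Finset G) : Set G) := by
    intro F; ext; simp
  rw [e1, Set.ncard_coe_finset] at *
  rcases lt_or_ge 1 δ with h | h
  · have : (0:ℝ) ≤ S.card := Nat.cast_nonneg _
    have : (0:ℝ) ≤ (S.filter fun s => ∀ k ∈ K, k * s ∈ S).card := Nat.cast_nonneg _
    nlinarith
  have sub : (F.filter fun s => ∀ k ∈ K, k * s ∈ F) ⊆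
      (S.filter fun s => ∀ k ∈ K, k * s ∈ S) ∪
      ((F \ S) ∪ K.biUnion fun k => (F \ S).image fun s => k⁻¹ * s) := by
    intro s hs
    simp only [Finset.mem_filter, Finset.mem_union, Finset.mem_sdiff, Finset.mem_biUnion,
      Finset.mem_image] at hs ⊢
    by_cases h1 : s ∈ S
    · by_cases h2 : ∀ k ∈ K, k * s ∈ S
      · exact Or.inl ⟨h1, h2⟩
      · push Not at h2
        obtain ⟨k, hk, hks⟩ := h2
        exact Or.inr (Or.inr ⟨k, hk, k * s, ⟨hs.2 k hk, hks⟩, by group⟩)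
    · exact Or.inr (Or.inl ⟨hs.1, h1⟩)
  have c1 := Finset.card_le_card sub
  have c2 := Finset.card_union_le (S.filter fun s => ∀ k ∈ K, k * s ∈ S)
      ((F \ S) ∪ K.biUnion fun k => (F \ S).image fun s => k⁻¹ * s)
  have c3 := Finset.card_union_le (F \ S) (K.biUnion fun k => (F \ S).image fun s => k⁻¹ * s)
  have c4 : (K.biUnion fun k => (F \ S).image fun s => k⁻¹ * s).card ≤ K.card * (F \ S).card :=
    Finset.card_biUnion_le_card_mul _ _ _ fun k _ => Finset.card_image_le
  have c5 : (F \ S).card + S.card = F.card := Finset.card_sdiff_add_card_eq_card hSF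
  have c6 : ((F.filter fun s => ∀ k ∈ K, k * s ∈ F).card : ℝ) ≤
      (S.filter fun s => ∀ k ∈ K, k * s ∈ S).card + ((F \ S).card + K.card * (F \ S).card) := by
    have := c1.trans (c2.trans (Nat.add_le_add_left (c3.trans (Nat.add_le_add_left c4 _)) _))
    exact_mod_cast this
  have c7 : ((F \ S).card : ℝ) + S.card = F.card := by exact_mod_cast c5
  have c8 : (S.card : ℝ) ≤ F.card := by exact_mod_cast Finset.card_le_card hSF
  have c9 : (0:ℝ) ≤ F.card := Nat.cast_nonneg _
  have hd : ((F \ S).card : ℝ) ≤ ε * F.card := by linarith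
  have hk : (0:ℝ) ≤ K.card := Nat.cast_nonneg _
  have c10 : (K.card : ℝ) * (F \ S).card ≤ K.card * (ε * F.card) := by gcongr
  have c11 : ε * (2 + K.card) * F.card ≤ δ * F.card := by gcongr
  have c12 : (1 - δ) * S.card ≤ (1 - δ) * F.card :=
    mul_le_mul_of_nonneg_left c8 (by linarith)
  nlinarith

theorem borelCastle [Infinite G] (hG : AmenableGroup G) (hfree : FreeAction G X)
    (K : Finset G) (δ : ℝ) (hδ : 0 < δ) (N : ℕ) (η : ℝ) (hη : 0 < η) :
    ∃ (ι : Type) (_ : Fintype ι) (S : ι → Finset G) (V : ι → Set X),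
      (∀ i, MeasurableSet (V i)) ∧ Castle S V ∧
      (∀ i, FolnerInv G K δ (S i) ∧ N ≤ (S i).card) ∧
      ∀ μ : Measure X, IsProbabilityMeasure μ → (∀ g : G, Measure.map (fun x => g • x) μ = μ) →
        μ.real (cov S V)ᶜ ≤ η := by
  classical
  set ε := min (1 / 2) (δ / (2 + K.card)) with hεd
  have hε : 0 < ε := lt_min (by norm_num) (by positivity)
  have hε2 : ε ≤ 1 / 2 := min_le_left _ _
  have hεK : ε * (2 + K.card) ≤ δ := by
    have : ε ≤ δ / (2 + K.card) := min_le_right _ _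
    rwa [le_div_iff₀ (by positivity)] at this
  obtain ⟨T, hT⟩ := Infinite.exists_subset_card_eq G (2 * N)
  have hGood : ∀ (L : Finset G) (β : ℝ), 0 < β → ∃ F : Finset G, F.Nonempty ∧
      (FolnerInv G K ε F ∧ 2 * N ≤ F.card) ∧ FolnerInv G L β F := by
    intro L β hβ
    have mono : ∀ (L L' : Finset G) (a b : ℝ) (F : Finset G), L' ⊆ L → a ≤ b →
        FolnerInv G L a F → FolnerInv G L' b F := by
      intro L L' a b F hL hab h
      unfold FolnerInv at *
      have h1 : ({s | s ∈ F ∧ ∀ k ∈ L, k * s ∈ F} : Set G) ⊆ {s | s ∈ F ∧ ∀ k ∈ L', k * s ∈ F} :=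
        fun s hs => ⟨hs.1, fun k hk => hs.2 k (hL hk)⟩
      have h2 := Set.ncard_le_ncard h1 (F.finite_toSet.subset fun s hs => hs.1)
      have h3 : (({s | s ∈ F ∧ ∀ k ∈ L, k * s ∈ F} : Set G).ncard : ℝ) ≤
        ({s | s ∈ F ∧ ∀ k ∈ L', k * s ∈ F} : Set G).ncard := by exact_mod_cast h2
      have : (0:ℝ) ≤ F.card := Nat.cast_nonneg _
      nlinarith
    obtain ⟨F, hF, hFi⟩ := hG (K ∪ L ∪ T) (min ε β) (lt_min hε hβ)
    refine ⟨F, hF, ⟨mono _ _ _ _ F (by grind) (min_le_left _ _) hFi, ?_⟩,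
      mono _ _ _ _ F (by grind) (min_le_right _ _) hFi⟩
    have h1 : FolnerInv G T (1 / 2) F := mono _ _ _ _ F (by grind) ((min_le_left _ _).trans hε2) hFi
    unfold FolnerInv at h1
    have h2 : ({s | s ∈ F ∧ ∀ k ∈ T, k * s ∈ F} : Set G).Nonempty := by
      by_contra h
      rw [Set.not_nonempty_iff_eq_empty] at h
      rw [h] at h1
      have : (0:ℝ) < F.card := by exact_mod_cast hF.card_pos
      simp at h1
      linarith
    obtain ⟨s, hs, hs'⟩ := h2
    rw [← hT, ← Finset.card_image_of_injective T (mul_left_injective s)]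
    exact Finset.card_le_card (Finset.image_subset_iff.2 hs')
  obtain ⟨n, hn⟩ := exists_pow_lt_of_lt_one (half_pos hη) (by linarith : 1 - ε < 1)
  obtain ⟨ι, _, S, V, hV, hC, hS, hμ⟩ := owInduct (X := X) hfree ε hε (by linarith)
    (fun F => FolnerInv G K ε F ∧ 2 * N ≤ F.card) hGood n ∅ (η / 2) (half_pos hη)
  refine ⟨ι, inferInstance, S, V, hV, hC, fun i => ?_, fun μ h1 h2 => ?_⟩
  · obtain ⟨F, ⟨h1, h2⟩, h3, h4⟩ := hS i
    refine ⟨folner_sub K δ ε hδ hεK F _ h1 h3 h4, ?_⟩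
    have : (2 * N : ℝ) ≤ F.card := by exact_mod_cast h2
    have : (N : ℝ) ≤ (S i).card := by nlinarith
    exact_mod_cast this
  · have := (hμ μ h1 h2).1
    linarith

end Part2

open MeasureTheory Set Pointwise

section Part3
set_option linter.unusedSectionVars false

variable {G X : Type*} [Group G] [MetricSpace X] [MeasurableSpace X] [MulAction G X]
  [BorelSpace X] [ContinuousConstSMul G X] [CompactSpace X]

theorem eventually_open (μ : ProbabilityMeasure X) (U : Set X) (hU : IsOpen U) (c : ℝ)
    (h : c < (μ : Measure X).real U) : ∀ᶠ ν : ProbabilityMeasure X in nhds μ,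
      c < (ν : Measure X).real U := by
  rcases lt_or_ge c 0 with hc | hc
  · exact Filter.Eventually.of_forall fun ν => hc.trans_le measureReal_nonneg
  have h1 := ProbabilityMeasure.le_liminf_measure_open_of_tendsto
    (Filter.tendsto_id (x := nhds μ)) hU
  have h2 : ENNReal.ofReal c < (μ : Measure X) U :=
    (ENNReal.ofReal_lt_iff_lt_toReal hc (measure_ne_top _ _)).2 h
  filter_upwards [Filter.eventually_lt_of_lt_liminf (h2.trans_le h1)] with ν hν
  exact (ENNReal.ofReal_lt_iff_lt_toReal hc (measure_ne_top _ _)).1 hν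

theorem smallCover (T : Finset G) (δ : ℝ) (hδ : 0 < δ) :
    ∃ (k : ℕ) (O : Fin k → Set X), (∀ j, IsOpen (O j)) ∧ (⋃ j, O j = univ) ∧
      ∀ j, ∀ s ∈ T, ∀ A ⊆ O j, Metric.diam (s • A) < δ := by
  classical
  let O : X → Set X := fun x => ⋂ s ∈ T, (fun y : X => s • y) ⁻¹' Metric.ball (s • x) (δ / 3)
  have hO : ∀ x, IsOpen (O x) := fun x =>
    isOpen_biInter_finset fun s _ => Metric.isOpen_ball.preimage (continuous_const_smul s)
  obtain ⟨t, ht⟩ := isCompact_univ.elim_finite_subcover O hO (fun x _ => mem_iUnion.2 ⟨x, by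
    simp only [O, mem_iInter]
    intro s _
    exact Metric.mem_ball_self (by linarith)⟩)
  refine ⟨t.card, fun j => O (t.equivFin.symm j).1, fun j => hO _, ?_, ?_⟩
  · refine eq_univ_of_forall fun x => ?_
    obtain ⟨i, hi, hx⟩ := mem_iUnion₂.1 (ht (mem_univ x))
    exact mem_iUnion.2 ⟨t.equivFin ⟨i, hi⟩, by simpa using hx⟩
  · intro j s hs A hA
    have : s • A ⊆ Metric.closedBall (s • (t.equivFin.symm j).1) (δ / 3) := by
      rintro _ ⟨y, hy, rfl⟩
      have := mem_iInter₂.1 (hA hy) s hs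
      exact Metric.ball_subset_closedBall this
    have := Metric.diam_le_of_subset_closedBall (by linarith) this
    linarith

/-- Good open castle. -/
def GoodCastle (K : Finset G) (δ : ℝ) (N : ℕ) {ι : Type} (S : ι → Finset G) (V : ι → Set X) :
    Prop :=
  (∀ i, IsOpen (V i)) ∧ Castle S (fun i => closure (V i)) ∧
  (∀ i, FolnerInv G K δ (S i) ∧ N ≤ (S i).card) ∧
  ∀ i, ∀ s ∈ S i, Metric.diam (s • closure (V i)) < δ

theorem openCastle [Infinite G] (hG : AmenableGroup G) (hfree : FreeAction G X)
    (K : Finset G) (δ : ℝ) (hδ : 0 < δ) (N : ℕ) (η : ℝ) (hη : 0 < η)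
    (μ : ProbabilityMeasure X) (hμ : InvariantMeasure G X μ) :
    ∃ (ι : Type) (_ : Fintype ι) (S : ι → Finset G) (V : ι → Set X),
      GoodCastle K δ N S V ∧ 1 - η < (μ : Measure X).real (cov S V) := by
  classical
  obtain ⟨ι, _, S, B, hB, hC, hS, hc⟩ := borelCastle hG hfree K δ hδ N (η / 4) (by linarith)
  replace hc := hc (μ : Measure X) inferInstance hμ
  obtain ⟨k, O, hO, hOc, hOd⟩ := smallCover (X := X) (Finset.univ.biUnion S) δ hδ
  let S2 : ι × Fin k → Finset G := fun p => S p.1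
  let B2 : ι × Fin k → Set X := fun p => B p.1 ∩ (O p.2 \ ⋃ l, ⋃ (_ : l < p.2), O l)
  have mB2 : ∀ p, MeasurableSet (B2 p) := fun p => (hB p.1).inter ((hO _).measurableSet.diff
    (MeasurableSet.iUnion fun l => MeasurableSet.iUnion fun _ => (hO l).measurableSet))
  have hC2 : Castle S2 B2 := by
    rintro ⟨i, j⟩ ⟨i', j'⟩ s hs t ht x hx y hy e
    obtain ⟨h1, h2⟩ := hC i i' s hs t ht x hx.1 y hy.1 e
    subst h2
    have hxy := smul_left_cancel s e
    subst hxy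
    refine ⟨Prod.ext h1 ?_, rfl⟩
    rcases lt_trichotomy j j' with h | h | h
    · exact absurd (mem_iUnion₂.2 ⟨j, h, hx.2.1⟩) hy.2.2
    · exact h
    · exact absurd (mem_iUnion₂.2 ⟨j', h, hy.2.1⟩) hx.2.2
  have hcov : cov S2 B2 = cov S B := by
    ext z
    simp only [mem_cov]
    constructor
    · rintro ⟨p, s, hs, x, hx, e⟩
      exact ⟨p.1, s, hs, x, hx.1, e⟩
    · rintro ⟨i, s, hs, x, hx, e⟩
      have hx' : ∃ n : ℕ, ∃ h : n < k, x ∈ O ⟨n, h⟩ := by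
        obtain ⟨j, hj⟩ := mem_iUnion.1 (hOc ▸ mem_univ x : x ∈ ⋃ j, O j)
        exact ⟨j, j.2, hj⟩
      obtain ⟨h1, h2⟩ := Nat.find_spec hx'
      refine ⟨(i, ⟨Nat.find hx', h1⟩), s, hs, x, ⟨hx, h2, ?_⟩, e⟩
      intro hh
      obtain ⟨l, hl, hxl⟩ := mem_iUnion₂.1 hh
      exact Nat.find_min hx' (m := l) hl ⟨l.2, hxl⟩
  obtain ⟨M, hM⟩ : ∃ M : ℝ, M = ∑ p, ((S2 p).card : ℝ) + 1 := ⟨_, rfl⟩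
  have hMpos : 0 < M := by
    have : 0 ≤ ∑ p, ((S2 p).card : ℝ) := Finset.sum_nonneg fun p _ => Nat.cast_nonneg _
    linarith
  have hK : ∀ p, ∃ C ⊆ B2 p, IsClosed C ∧
      (μ : Measure X).real (B2 p) ≤ (μ : Measure X).real C + η / (4 * M) := by
    intro p
    have hpos : 0 < η / (4 * M) := by positivity
    obtain ⟨C, h1, h2, h3⟩ := (mB2 p).exists_isClosed_lt_add (μ := (μ : Measure X))
      (measure_ne_top _ _) (ε := ENNReal.ofReal (η / (4 * M))) (by simpa using hpos)
    refine ⟨C, h1, h2, ?_⟩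
    have := ENNReal.toReal_mono (by finiteness) h3.le
    rwa [ENNReal.toReal_add (by finiteness) (by finiteness), ENNReal.toReal_ofReal hpos.le] at this
  choose C hCB hCcl hCm using hK
  have hsep : ∀ p q : ι × Fin k, ∀ s t : G, ∃ U U' : Set X, IsOpen U ∧ IsOpen U' ∧ C p ⊆ U ∧
      C q ⊆ U' ∧ (s ∈ S2 p → t ∈ S2 q → ¬ (p = q ∧ s = t) → Disjoint (s • U) (t • U')) := by
    intro p q s t
    by_cases h : s ∈ S2 p ∧ t ∈ S2 q ∧ ¬ (p = q ∧ s = t)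
    · have hd : Disjoint (s • C p) (t • C q) := by
        refine Set.disjoint_left.2 ?_
        rintro _ ⟨x, hx, rfl⟩ ⟨y, hy, e⟩
        exact h.2.2 (hC2 p q s h.1 t h.2.1 x (hCB p hx) y (hCB q hy) e.symm)
      obtain ⟨U, U', hU, hU', h1, h2, h3⟩ := SeparatedNhds.of_isCompact_isCompact
        ((hCcl p).smul s).isCompact ((hCcl q).smul t).isCompact hd
      refine ⟨s⁻¹ • U, t⁻¹ • U', hU.smul _, hU'.smul _, ?_, ?_, fun _ _ _ => by simpa using h3⟩
      · exact Set.subset_smul_set_iff.2 (by simpa using h1)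
      · exact Set.subset_smul_set_iff.2 (by simpa using h2)
    · exact ⟨univ, univ, isOpen_univ, isOpen_univ, subset_univ _, subset_univ _,
        fun a b c => absurd ⟨a, b, c⟩ h⟩
  choose U U' hU hU' hCU hCU' hdis using hsep
  let Q : ι × Fin k → Set X := fun p => O p.2 ∩
    ((⋂ q, ⋂ s ∈ S2 p, ⋂ t ∈ S2 q, U p q s t) ∩ (⋂ q, ⋂ s ∈ S2 q, ⋂ t ∈ S2 p, U' q p s t))
  have hQo : ∀ p, IsOpen (Q p) := by
    intro p
    refine (hO _).inter (IsOpen.inter ?_ ?_)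
    · exact isOpen_iInter_of_finite fun q => isOpen_biInter_finset fun s _ =>
        isOpen_biInter_finset fun t _ => hU _ _ _ _
    · exact isOpen_iInter_of_finite fun q => isOpen_biInter_finset fun s _ =>
        isOpen_biInter_finset fun t _ => hU' _ _ _ _
  have hCQ : ∀ p, C p ⊆ Q p := by
    intro p x hx
    refine ⟨(hCB p hx).2.1, ?_, ?_⟩
    · simp only [mem_iInter]
      exact fun q s _ t _ => hCU p q s t hx
    · simp only [mem_iInter]
      exact fun q s _ t _ => hCU' q p s t hx
  choose V hVo hCV hVQ using fun p => normal_exists_closure_subset (hCcl p) (hQo p) (hCQ p)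
  refine ⟨ι × Fin k, inferInstance, S2, V, ⟨hVo, ?_, fun p => hS p.1, ?_⟩, ?_⟩
  · intro p q s hs t ht x hx y hy e
    by_contra hne
    have hx' := (hVQ p hx).2.1
    have hy' := (hVQ q hy).2.2
    simp only [mem_iInter] at hx' hy'
    refine Set.disjoint_left.1 (hdis p q s t hs ht hne) ⟨x, hx' q s hs t ht, rfl⟩
      ⟨y, hy' p s hs t ht, e.symm⟩
  · intro p s hs
    exact hOd p.2 s (Finset.mem_biUnion.2 ⟨p.1, Finset.mem_univ _, hs⟩) _
      fun x hx => (hVQ p hx).1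
  · have hCc : Castle S2 C := fun p q s hs t ht x hx y hy e =>
      hC2 p q s hs t ht x (hCB p hx) y (hCB q hy) e
    have e1 := measure_cov (fun p => (hCcl p).measurableSet) hCc (μ := (μ : Measure X)) hμ
    have e2 := measure_cov mB2 hC2 (μ := (μ : Measure X)) hμ
    have e3 : (μ : Measure X).real (cov S2 C) ≤ (μ : Measure X).real (cov S2 V) := by
      refine measureReal_mono fun z hz => ?_
      obtain ⟨p, s, hs, x, hx, e⟩ := mem_cov.1 hz
      exact mem_cov.2 ⟨p, s, hs, x, hCV p hx, e⟩
    have e4 : ∑ p, ((S2 p).card : ℝ) * (μ : Measure X).real (B2 p) ≤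
        ∑ p, ((S2 p).card : ℝ) * (μ : Measure X).real (C p) +
        (∑ p, ((S2 p).card : ℝ)) * (η / (4 * M)) := by
      rw [Finset.sum_mul, ← Finset.sum_add_distrib]
      refine Finset.sum_le_sum fun p _ => ?_
      rw [← mul_add]
      exact mul_le_mul_of_nonneg_left (hCm p) (Nat.cast_nonneg _)
    have e5 : (∑ p, ((S2 p).card : ℝ)) * (η / (4 * M)) ≤ η / 4 := by
      have : (∑ p, ((S2 p).card : ℝ)) ≤ M := by rw [hM]; linarith
      calc _ ≤ M * (η / (4 * M)) := by gcongr
        _ = η / 4 := by field_simp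
    rw [probReal_compl_eq_one_sub (measurableSet_cov hB), ← hcov] at hc
    linarith

end Part3

open MeasureTheory Set Pointwise

section Part4
set_option linter.unusedSectionVars false

variable {G X : Type*} [Group G] [MetricSpace X] [MeasurableSpace X] [MulAction G X]
  [BorelSpace X] [ContinuousConstSMul G X] [CompactSpace X]

theorem isClosed_MG : IsClosed (MG G X) := by
  have : MG G X = ⋂ g : G, {μ : ProbabilityMeasure X |
      μ.map (f := fun x => g • x) (measurable_const_smul g).aemeasurable = μ} := by
    ext μ
    simp only [MG, InvariantMeasure, mem_iInter, mem_ofPred_eq]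
    refine forall_congr' fun g => ?_
    rw [← ProbabilityMeasure.toMeasure_injective.eq_iff]
    rfl
  rw [this]
  exact isClosed_iInter fun g => isClosed_eq
    (ProbabilityMeasure.continuous_map (continuous_const_smul g)) continuous_id

theorem usc_real (F : Set X) (hF : IsClosed F) :
    UpperSemicontinuous fun μ : ProbabilityMeasure X => (μ : Measure X).real F := by
  intro μ y hy
  have h1 := eventually_open μ Fᶜ hF.isOpen_compl (1 - y) (by
    rw [probReal_compl_eq_one_sub hF.measurableSet]; linarith)
  filter_upwards [h1] with ν hν
  rw [probReal_compl_eq_one_sub hF.measurableSet] at hν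
  linarith

/-- evaluation embedding -/
noncomputable def evalMap (μ : ProbabilityMeasure X) : C(X, ℝ) → ℝ := fun f => ∫ x, f x ∂(μ : Measure X)

theorem evalMap_continuous : Continuous (evalMap (X := X)) :=
  continuous_pi fun f => ProbabilityMeasure.continuous_integral_continuousMap f

theorem evalMap_injective : Function.Injective (evalMap (X := X)) := by
  intro μ ν h
  apply ProbabilityMeasure.toMeasure_injective
  refine ext_of_forall_integral_eq_of_IsFiniteMeasure fun f => ?_
  exact congrFun h f.toContinuousMap

theorem cond_inv {μ : Measure X} (h : ∀ g : G, Measure.map (fun x => g • x) μ = μ) {A : Set X}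
    (hA : MeasurableSet A) (hAi : ∀ g : G, g • A = A) (g : G) :
    Measure.map (fun x => g • x) (ProbabilityTheory.cond μ A) = ProbabilityTheory.cond μ A := by
  have hp : (fun x : X => g • x) ⁻¹' A = A := by
    rw [Set.preimage_smul, hAi]
  unfold ProbabilityTheory.cond
  rw [Measure.map_smul]
  congr 1
  have := Measure.restrict_map (μ := μ) (measurable_const_smul g) hA
  rw [h g, hp] at this
  exact this.symm

theorem ergodic_bound (F : Set X) (hF : IsClosed F) (c : ℝ)
    (h : ∀ ν ∈ EG G X, (ν : Measure X).real F ≤ c) (μ : ProbabilityMeasure X) (hμ : μ ∈ MG G X) :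
    (μ : Measure X).real F ≤ c := by
  have hcomp : IsCompact (MG G X) := isClosed_MG.isCompact
  obtain ⟨μ1, hμ1, hmax⟩ := UpperSemicontinuousOn.exists_isMaxOn (s := MG G X) ⟨μ, hμ⟩ hcomp
    ((usc_real F hF).upperSemicontinuousOn _)
  set c0 := (μ1 : Measure X).real F with hc0
  set Mx : Set (ProbabilityMeasure X) := MG G X ∩ {ν | c0 ≤ (ν : Measure X).real F}
  have hMx : IsCompact Mx :=
    hcomp.inter_right ((usc_real F hF).isClosed_preimage c0)
  obtain ⟨p, hp⟩ := (hMx.image evalMap_continuous).extremePoints_nonempty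
    (Set.Nonempty.image _ ⟨μ1, hμ1, (by exact le_refl c0)⟩)
  obtain ⟨⟨μ0, ⟨h0, h0'⟩, rfl⟩, hext⟩ := mem_extremePoints.1 hp
  have hle : ∀ ν ∈ MG G X, (ν : Measure X).real F ≤ c0 := fun ν hν => hmax hν
  have herg : μ0 ∈ EG G X := by
    refine ⟨h0, fun A hA hAi => ?_⟩
    by_contra hcon
    push Not at hcon
    obtain ⟨n0, n1⟩ := hcon
    have hAic : ∀ g : G, g • Aᶜ = Aᶜ := fun g => by rw [Set.smul_set_compl, hAi]
    have z1 : (μ0 : Measure X) A ≠ 0 := fun e => n0 ((ProbabilityMeasure.null_iff_toMeasure_null _ _).2 e)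
    have z2 : (μ0 : Measure X) Aᶜ ≠ 0 := by
      intro e
      apply n1
      have : (μ0 : Measure X) A = 1 := (prob_compl_eq_zero_iff hA).1 e
      simp [ProbabilityMeasure.coeFn_def, this]
    have : IsProbabilityMeasure (ProbabilityTheory.cond (μ0 : Measure X) A) :=
      ProbabilityTheory.cond_isProbabilityMeasure z1
    have : IsProbabilityMeasure (ProbabilityTheory.cond (μ0 : Measure X) Aᶜ) :=
      ProbabilityTheory.cond_isProbabilityMeasure z2
    let ν1 : ProbabilityMeasure X := ⟨ProbabilityTheory.cond (μ0 : Measure X) A, inferInstance⟩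
    let ν2 : ProbabilityMeasure X := ⟨ProbabilityTheory.cond (μ0 : Measure X) Aᶜ, inferInstance⟩
    have i1 : ν1 ∈ MG G X := cond_inv h0 hA hAi
    have i2 : ν2 ∈ MG G X := cond_inv h0 hA.compl hAic
    set a := (μ0 : Measure X).real A with ha
    set b := (μ0 : Measure X).real Aᶜ with hb
    have hab : a + b = 1 := probReal_add_probReal_compl hA
    have ha0 : 0 < a := ENNReal.toReal_pos z1 (measure_ne_top _ _)
    have hb0 : 0 < b := ENNReal.toReal_pos z2 (measure_ne_top _ _)
    have hFeq : a * (ν1 : Measure X).real F + b * (ν2 : Measure X).real F =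
        (μ0 : Measure X).real F := by
      have := ProbabilityTheory.cond_add_cond_compl_eq (μ := (μ0 : Measure X)) hA (t := F)
      have := congrArg ENNReal.toReal this
      rw [ENNReal.toReal_add (by finiteness) (by finiteness), ENNReal.toReal_mul,
        ENNReal.toReal_mul] at this
      rw [← Measure.real, ← Measure.real, ← Measure.real, ← Measure.real, ← Measure.real] at this
      simp only [ν1, ν2, ProbabilityMeasure.coe_mk]
      linarith
    have l1 := hle ν1 i1
    have l2 := hle ν2 i2
    have h0'' : c0 ≤ (μ0 : Measure X).real F := h0'
    have hac : a * c0 + b * c0 = c0 := by rw [← add_mul, hab, one_mul]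
    have k1 : c0 ≤ (ν1 : Measure X).real F := by
      by_contra hk
      have q1 := mul_lt_mul_of_pos_left (not_le.1 hk) ha0
      have q2 := mul_le_mul_of_nonneg_left l2 hb0.le
      linarith
    have k2 : c0 ≤ (ν2 : Measure X).real F := by
      by_contra hk
      have q1 := mul_lt_mul_of_pos_left (not_le.1 hk) hb0
      have q2 := mul_le_mul_of_nonneg_left l1 ha0.le
      linarith
    have hseg : evalMap μ0 ∈ openSegment ℝ (evalMap ν1) (evalMap ν2) := by
      refine ⟨a, b, ha0, hb0, hab, ?_⟩
      funext f
      have hIntg : Integrable (fun x => f x) (μ0 : Measure X) :=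
        f.continuous.integrable_of_hasCompactSupport (HasCompactSupport.of_compactSpace _)
      have := integral_add_compl hA hIntg
      simp only [Pi.add_apply, Pi.smul_apply, smul_eq_mul, evalMap, ν1, ν2,
        ProbabilityMeasure.coe_mk, ProbabilityTheory.cond, integral_smul_measure,
        ENNReal.toReal_inv]
      change a * (a⁻¹ * _) + b * (b⁻¹ * _) = _
      rw [← this]
      field_simp
    have e1 : evalMap ν1 = evalMap μ0 :=
      hext _ ⟨ν1, ⟨i1, k1⟩, rfl⟩ _ ⟨ν2, ⟨i2, k2⟩, rfl⟩ hseg |>.1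
    have e2 : ν1 = μ0 := evalMap_injective e1
    have e3 : (ν1 : Measure X) A = 1 := by
      simp only [ν1, ProbabilityMeasure.coe_mk]
      exact ProbabilityTheory.cond_apply_self z1 (measure_ne_top _ _)
    rw [e2] at e3
    exact n1 (by simp [ProbabilityMeasure.coeFn_def, e3])
  exact (hle μ hμ).trans (le_trans h0' (h μ0 herg))

end Part4

open MeasureTheory Set Pointwise

section Part5
set_option linter.unusedSectionVars false

variable {G X : Type*} [Group G] [MetricSpace X] [MeasurableSpace X] [MulAction G X]
  [BorelSpace X] [ContinuousConstSMul G X] [CompactSpace X]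

theorem folner_mono {L L' : Finset G} {a b : ℝ} {F : Finset G} (hL : L' ⊆ L) (hab : a ≤ b)
    (h : FolnerInv G L a F) : FolnerInv G L' b F := by
  unfold FolnerInv at *
  have h1 : ({s | s ∈ F ∧ ∀ k ∈ L, k * s ∈ F} : Set G).ncard ≤
      ({s | s ∈ F ∧ ∀ k ∈ L', k * s ∈ F} : Set G).ncard := by
    refine Set.ncard_le_ncard ?_ (F.finite_toSet.subset fun s hs => hs.1)
    exact fun s hs => ⟨hs.1, fun k hk => hs.2 k (hL hk)⟩
  have h2 : (({s | s ∈ F ∧ ∀ k ∈ L, k * s ∈ F} : Set G).ncard : ℝ) ≤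
      ({s | s ∈ F ∧ ∀ k ∈ L', k * s ∈ F} : Set G).ncard := by exact_mod_cast h1
  have h3 : (0 : ℝ) ≤ F.card := by positivity
  nlinarith

/-- ergodic average -/
noncomputable def avgF (F : Finset G) (u : X → ℝ) (x : X) : ℝ := (∑ s ∈ F, u (s • x)) / F.card

theorem avgF_continuous (F : Finset G) (u : C(X, ℝ)) : Continuous (avgF F u : X → ℝ) := by
  unfold avgF
  refine Continuous.div_const (continuous_finsetSum _ fun s _ => ?_) _
  exact u.continuous.comp (continuous_const_smul s)

/-- translate -/
def transl (g : G) (u : C(X, ℝ)) : C(X, ℝ) := u.comp ⟨fun x => g • x, continuous_const_smul g⟩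

theorem avgF_transl (g : G) (u : C(X, ℝ)) (γ : ℝ) (F : Finset G) (hF : F.Nonempty)
    (h : FolnerInv G {g} γ F) (x : X) : |avgF F (transl g u) x - avgF F u x| ≤ 2 * γ * ‖u‖ := by
  classical
  set F0 := F.filter (fun s => g * s ∈ F) with hF0
  have hc : (1 - γ) * (F.card : ℝ) ≤ F0.card := by
    have : ({s | s ∈ F ∧ ∀ k ∈ ({g} : Finset G), k * s ∈ F} : Set G) = (F0 : Set G) := by
      ext s; simp [F0]
    unfold FolnerInv at h
    rwa [this, Set.ncard_coe_finset] at h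
  have hFp : (0 : ℝ) < F.card := by exact_mod_cast hF.card_pos
  set F1 := F0.image (fun s => g * s) with hF1
  have hc1 : F1.card = F0.card := Finset.card_image_of_injective _ (mul_right_injective g)
  have s0 : F0 ⊆ F := Finset.filter_subset _ _
  have s1 : F1 ⊆ F := by
    intro t ht
    obtain ⟨s, hs, rfl⟩ := Finset.mem_image.1 ht
    exact (Finset.mem_filter.1 hs).2
  have e0 : ∑ s ∈ F, transl g u (s • x) = ∑ s ∈ F \ F0, transl g u (s • x)
      + ∑ s ∈ F0, transl g u (s • x) := (Finset.sum_sdiff s0).symm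
  have e1 : ∑ s ∈ F, u (s • x) = ∑ s ∈ F \ F1, u (s • x)
      + ∑ s ∈ F1, u (s • x) := (Finset.sum_sdiff s1).symm
  have e2 : ∑ s ∈ F1, u (s • x) = ∑ s ∈ F0, transl g u (s • x) := by
    rw [hF1, Finset.sum_image (fun a _ b _ hab => mul_right_injective g hab)]
    refine Finset.sum_congr rfl fun s _ => ?_
    simp [transl, mul_smul]
  have b0 : |∑ s ∈ F \ F0, transl g u (s • x)| ≤ (F.card - F0.card) * ‖u‖ := by
    refine (Finset.abs_sum_le_sum_abs _ _).trans ?_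
    refine (Finset.sum_le_card_nsmul _ _ ‖u‖ fun s _ => u.norm_coe_le_norm _).trans ?_
    rw [nsmul_eq_mul, Finset.cast_card_sdiff s0]
  have b1 : |∑ s ∈ F \ F1, u (s • x)| ≤ (F.card - F0.card) * ‖u‖ := by
    refine (Finset.abs_sum_le_sum_abs _ _).trans ?_
    refine (Finset.sum_le_card_nsmul _ _ ‖u‖ fun s _ => u.norm_coe_le_norm _).trans ?_
    rw [nsmul_eq_mul, Finset.cast_card_sdiff s1, hc1]
  unfold avgF
  rw [← sub_div, abs_div, abs_of_pos hFp, div_le_iff₀ hFp, e0, e1, e2]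
  have hu := norm_nonneg u
  have h5 : (F.card - F0.card) * ‖u‖ ≤ (γ * F.card) * ‖u‖ :=
    mul_le_mul_of_nonneg_right (by linarith) hu
  have h6 := abs_sub (∑ s ∈ F \ F0, transl g u (s • x)) (∑ s ∈ F \ F1, u (s • x))
  rw [add_sub_add_right_eq_sub]
  linarith

/-- `u` is equivalent to `h` -/
def Equi (G : Type*) {X : Type*} [Group G] [MetricSpace X] [MeasurableSpace X] [MulAction G X]
    [CompactSpace X] (h u : C(X, ℝ)) : Prop :=
  (∀ β : ℝ, 0 < β → ∃ (L : Finset G) (γ : ℝ), 0 < γ ∧ ∀ F : Finset G, F.Nonempty →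
    FolnerInv G L γ F → ∀ x : X, |avgF F u x - avgF F h x| ≤ β) ∧
  ∀ μ ∈ MG G X, ∫ x, u x ∂(μ : Measure X) = ∫ x, h x ∂(μ : Measure X)

theorem cint (u : C(X, ℝ)) (μ : ProbabilityMeasure X) : Integrable (fun x => u x) (μ : Measure X) :=
  u.continuous.integrable_of_hasCompactSupport (HasCompactSupport.of_compactSpace _)

theorem mp_smul {μ : ProbabilityMeasure X} (hμ : μ ∈ MG G X) (g : G) :
    MeasurePreserving (fun x => g • x) (μ : Measure X) (μ : Measure X) :=
  ⟨measurable_const_smul g, hμ g⟩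

theorem integral_smul_inv {μ : ProbabilityMeasure X} (hμ : μ ∈ MG G X) (g : G) (u : X → ℝ) :
    ∫ x, u (g • x) ∂(μ : Measure X) = ∫ x, u x ∂(μ : Measure X) :=
  (mp_smul hμ g).integral_comp (Homeomorph.smul g).measurableEmbedding u

theorem equi_refl (h : C(X, ℝ)) : Equi G h h :=
  ⟨fun β hβ => ⟨∅, 1, one_pos, fun F _ _ x => by simpa using hβ.le⟩, fun _ _ => rfl⟩

theorem equi_transl (h u : C(X, ℝ)) (g : G) (hu : Equi G h u) : Equi G h (transl g u) := by
  classical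
  refine ⟨fun β hβ => ?_, fun μ hμ => ?_⟩
  · obtain ⟨L, γ, hγ, H⟩ := hu.1 (β / 2) (by positivity)
    have hn := norm_nonneg u
    have hp : 0 < ‖u‖ + 1 := by positivity
    refine ⟨insert g L, min γ (β / (4 * (‖u‖ + 1))), lt_min hγ (by positivity), fun F hF hFi x => ?_⟩
    have h1 := H F hF (folner_mono (Finset.subset_insert _ _) (min_le_left _ _) hFi) x
    have h2 := avgF_transl g u (β / (4 * (‖u‖ + 1))) F hF
      (folner_mono (by simp) (min_le_right _ _) hFi) x
    have h3 : 2 * (β / (4 * (‖u‖ + 1))) * ‖u‖ ≤ β / 2 := by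
      have : 2 * (β / (4 * (‖u‖ + 1))) * ‖u‖ = β / 2 * (‖u‖ / (‖u‖ + 1)) := by
        field_simp; ring
      rw [this]
      have : ‖u‖ / (‖u‖ + 1) ≤ 1 := by rw [div_le_one hp]; linarith
      nlinarith
    have := abs_sub_le (avgF F (transl g u) x) (avgF F u x) (avgF F h x)
    linarith
  · rw [← hu.2 μ hμ]
    exact integral_smul_inv hμ g u

theorem equi_convex (h : C(X, ℝ)) : Convex ℝ {u | Equi G h u} := by
  classical
  intro u hu w hw a b ha hb hab
  refine ⟨fun β hβ => ?_, fun μ hμ => ?_⟩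
  · obtain ⟨L, γ, hγ, H⟩ := hu.1 β hβ
    obtain ⟨L', γ', hγ', H'⟩ := hw.1 β hβ
    refine ⟨L ∪ L', min γ γ', lt_min hγ hγ', fun F hF hFi x => ?_⟩
    have h1 := H F hF (folner_mono Finset.subset_union_left (min_le_left _ _) hFi) x
    have h2 := H' F hF (folner_mono Finset.subset_union_right (min_le_right _ _) hFi) x
    have e : avgF F (a • u + b • w : C(X, ℝ)) x = a * avgF F u x + b * avgF F w x := by
      simp only [avgF, ContinuousMap.add_apply, ContinuousMap.smul_apply, smul_eq_mul,
        Finset.sum_add_distrib, ← Finset.mul_sum]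
      ring
    have e2 : avgF F (a • u + b • w : C(X, ℝ)) x - avgF F h x =
        a * (avgF F u x - avgF F h x) + b * (avgF F w x - avgF F h x) := by
      rw [e]
      have : avgF F h x = (a + b) * avgF F h x := by rw [hab, one_mul]
      linear_combination -this
    rw [e2]
    rw [abs_le] at h1 h2 ⊢
    have e3 : a * β + b * β = β := by rw [← add_mul, hab, one_mul]
    have q1 := mul_le_mul_of_nonneg_left h1.1 ha
    have q2 := mul_le_mul_of_nonneg_left h1.2 ha
    have q3 := mul_le_mul_of_nonneg_left h2.1 hb
    have q4 := mul_le_mul_of_nonneg_left h2.2 hb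
    constructor <;> linarith
  · have : ∫ x, (a • u + b • w : C(X, ℝ)) x ∂(μ : Measure X) =
        a * ∫ x, u x ∂(μ : Measure X) + b * ∫ x, w x ∂(μ : Measure X) := by
      simp only [ContinuousMap.add_apply, ContinuousMap.smul_apply, smul_eq_mul]
      rw [integral_add ((cint u μ).const_mul a) ((cint w μ).const_mul b), integral_const_mul,
        integral_const_mul]
    rw [this, hu.2 μ hμ, hw.2 μ hμ, ← add_mul, hab, one_mul]

theorem ergodic_const [Countable G] {μ : ProbabilityMeasure X} (hμ : μ ∈ EG G X) (f : X → ℝ)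
    (hf : Measurable f) (hinv : ∀ g : G, (fun x => f (g • x)) =ᵐ[(μ : Measure X)] f) :
    ∃ c, f =ᵐ[(μ : Measure X)] fun _ => c := by
  refine Filter.exists_eventuallyEq_const_of_forall_separating MeasurableSet fun s hs => ?_
  have hall : ∀ᵐ x ∂(μ : Measure X), ∀ g : G, f (g • x) = f x := ae_all_iff.2 hinv
  set B : Set X := {x | ∀ g : G, f (g • x) ∈ s} with hB
  have hBm : MeasurableSet B := by
    have : B = ⋂ g : G, (fun x => f (g • x)) ⁻¹' s := by ext x; simp [B]
    rw [this]
    exact MeasurableSet.iInter fun g => (hf.comp (measurable_const_smul g)) hs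
  have hBi : ∀ g : G, g • B = B := by
    intro g
    ext x
    rw [Set.mem_smul_set_iff_inv_smul_mem]
    constructor
    · intro hx k
      have := hx (k * g)
      rwa [mul_smul, smul_inv_smul] at this
    · intro hx k
      have := hx (k * g⁻¹)
      rwa [mul_smul] at this
  rcases hμ.2 B hBm hBi with h0 | h1
  · right
    have h0' : (μ : Measure X) B = 0 := (ProbabilityMeasure.null_iff_toMeasure_null _ _).1 h0
    have : ∀ᵐ x ∂(μ : Measure X), x ∉ B := measure_eq_zero_iff_ae_notMem.1 h0'
    filter_upwards [hall, this] with x hx hxB hxs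
    exact hxB fun g => by rw [hx g]; exact hxs
  · left
    have h1' : (μ : Measure X) B = 1 := by
      have := congrArg ((↑) : NNReal → ENNReal) h1
      simpa using this
    have : ∀ᵐ x ∂(μ : Measure X), x ∈ B := by
      rw [← prob_compl_eq_zero_iff hBm] at h1'
      exact h1'
    filter_upwards [this] with x hxB
    simpa using hxB 1

end Part5

open MeasureTheory Set Pointwise

section Part6
set_option linter.unusedSectionVars false

variable {G X : Type*} [Group G] [MetricSpace X] [MeasurableSpace X] [MulAction G X]
  [BorelSpace X] [ContinuousConstSMul G X] [CompactSpace X]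

theorem var_le (u : C(X, ℝ)) (μ : ProbabilityMeasure X) (c : ℝ) :
    ∫ x, (u x - ∫ y, u y ∂(μ : Measure X)) ^ 2 ∂(μ : Measure X) ≤
      ∫ x, (u x - c) ^ 2 ∂(μ : Measure X) := by
  have key : ∀ d : ℝ, ∫ x, (u x - d) ^ 2 ∂(μ : Measure X) =
      ∫ x, (u x) ^ 2 ∂(μ : Measure X) - 2 * d * (∫ y, u y ∂(μ : Measure X)) + d ^ 2 := by
    intro d
    have i1 := cint (u ^ 2) μ
    simp only [ContinuousMap.pow_apply] at i1
    have i2 := (cint u μ).const_mul (2 * d)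
    have : ∀ x, (u x - d) ^ 2 = (u x) ^ 2 - 2 * d * u x + d ^ 2 := fun x => by ring
    simp_rw [this]
    rw [integral_add (f := fun x => (u x) ^ 2 - 2 * d * u x) (i1.sub i2) (integrable_const _),
      integral_sub i1 i2, integral_const_mul]
    simp
  rw [key, key]
  nlinarith [sq_nonneg (c - ∫ y, u y ∂(μ : Measure X))]

theorem mean_ergodic [Countable G] {μ : ProbabilityMeasure X} (hμ : μ ∈ EG G X) (h : C(X, ℝ))
    (ε : ℝ) (hε : 0 < ε) : ∃ u, Equi G h u ∧
      ∫ x, (u x - ∫ y, h y ∂(μ : Measure X)) ^ 2 ∂(μ : Measure X) < ε := by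
  have hM : μ ∈ MG G X := hμ.1
  let T := ContinuousMap.toLp (E := ℝ) 2 (μ : Measure X) ℝ
  set K : Set (Lp ℝ 2 (μ : Measure X)) := closure (T '' {u | Equi G h u}) with hK
  have hKne : K.Nonempty := ⟨T h, subset_closure ⟨h, equi_refl h, rfl⟩⟩
  have hKcl : IsClosed K := isClosed_closure
  have hKcv : Convex ℝ K := ((equi_convex h).linear_image T.toLinearMap).closure
  obtain ⟨v, hvK, hv⟩ := exists_norm_eq_iInf_of_complete_convex hKne hKcl.isComplete hKcv 0
  have hv2 := (norm_eq_iInf_iff_real_inner_le_zero hKcv hvK).1 hv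
  let U : G → Lp ℝ 2 (μ : Measure X) →ₗᵢ[ℝ] Lp ℝ 2 (μ : Measure X) := fun g =>
    Lp.compMeasurePreservingₗᵢ ℝ (fun x => g • x) (mp_smul hM g)
  have hUT : ∀ g u, U g (T u) = T (transl g u) := by
    intro g u
    apply Lp.ext
    have h1 := Lp.coeFn_compMeasurePreserving (T u) (mp_smul hM g)
    have h2 := ContinuousMap.coeFn_toLp (p := 2) (𝕜 := ℝ) (μ : Measure X) u
    have h3 := ContinuousMap.coeFn_toLp (p := 2) (𝕜 := ℝ) (μ : Measure X) (transl g u)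
    have h4 := (mp_smul hM g).quasiMeasurePreserving.ae_eq_comp h2
    exact h1.trans (h4.trans h3.symm)
  have hUK : ∀ g, ∀ w ∈ K, U g w ∈ K := by
    intro g w hw
    refine map_mem_closure (U g).continuous hw ?_
    rintro _ ⟨u, hu, rfl⟩
    exact ⟨transl g u, equi_transl h u g hu, (hUT g u).symm⟩
  have hUv : ∀ g, U g v = v := by
    intro g
    have h1 := hv2 _ (hUK g v hvK)
    rw [zero_sub, inner_neg_left, inner_sub_right, real_inner_self_eq_norm_sq] at h1
    have h2 := norm_sub_sq_real v (U g v)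
    rw [(U g).norm_map] at h2
    have h3 : ‖v - U g v‖ ^ 2 ≤ 0 := by linarith
    have h4 : ‖v - U g v‖ = 0 := by
      have := sq_nonneg ‖v - U g v‖
      exact pow_eq_zero_iff (two_ne_zero) |>.1 (le_antisymm h3 this)
    exact (sub_eq_zero.1 (norm_eq_zero.1 h4)).symm
  obtain ⟨c, hc⟩ := ergodic_const hμ (v : X → ℝ) (Lp.stronglyMeasurable v).measurable (by
    intro g
    have h1 := Lp.coeFn_compMeasurePreserving v (mp_smul hM g)
    have h2 : (Lp.compMeasurePreserving (fun x => g • x) (mp_smul hM g)) v = v := hUv g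
    rw [h2] at h1
    exact h1.symm)
  obtain ⟨_, ⟨u, hu, rfl⟩, hd⟩ := Metric.mem_closure_iff.1 hvK (Real.sqrt ε) (Real.sqrt_pos.2 hε)
  refine ⟨u, hu, ?_⟩
  rw [← hu.2 μ hM]
  refine (var_le u μ c).trans_lt ?_
  have e1 : ∫ x, (u x - c) ^ 2 ∂(μ : Measure X) = ‖T u - v‖ ^ 2 := by
    rw [← real_inner_self_eq_norm_sq, L2.inner_def]
    refine integral_congr_ae ?_
    have h2 := ContinuousMap.coeFn_toLp (p := 2) (𝕜 := ℝ) (μ : Measure X) u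
    filter_upwards [h2, hc, Lp.coeFn_sub (T u) v] with x hx1 hx2 hx3
    have hx1' : (T u) x = u x := hx1
    rw [hx3, Pi.sub_apply, hx1', hx2]
    simp [sq]
  rw [e1]
  rw [dist_comm, dist_eq_norm] at hd
  calc ‖T u - v‖ ^ 2 < Real.sqrt ε ^ 2 := by gcongr
    _ = ε := Real.sq_sqrt hε.le

theorem avg_sq_le {μ : ProbabilityMeasure X} (hM : μ ∈ MG G X) (u : C(X, ℝ)) (c : ℝ) (F : Finset G)
    (hF : F.Nonempty) : ∫ x, (avgF F u x - c) ^ 2 ∂(μ : Measure X) ≤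
      ∫ x, (u x - c) ^ 2 ∂(μ : Measure X) := by
  have hFp : (0 : ℝ) < F.card := by exact_mod_cast hF.card_pos
  obtain ⟨w, hw⟩ : ∃ w : C(X, ℝ), ∀ x, w x = (u x - c) ^ 2 :=
    ⟨(u - ContinuousMap.const X c) ^ 2, fun x => rfl⟩
  let A : C(X, ℝ) := ⟨avgF F u, avgF_continuous F u⟩
  have hpt : ∀ x, (avgF F u x - c) ^ 2 ≤ avgF F w x := by
    intro x
    have e : avgF F u x - c = (∑ s ∈ F, (u (s • x) - c)) / F.card := by
      unfold avgF
      rw [Finset.sum_sub_distrib, Finset.sum_const, nsmul_eq_mul]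
      field_simp
    have h1 := sq_sum_le_card_mul_sum_sq (s := F) (f := fun s => u (s • x) - c)
    rw [e, div_pow, div_le_iff₀ (by positivity)]
    unfold avgF
    calc _ ≤ _ := h1
      _ = _ := by simp_rw [hw]; field_simp
  have htr : ∀ s ∈ F, Integrable (fun x => w (s • x)) (μ : Measure X) := fun s _ =>
    cint (transl s w) μ
  have hIntg : ∫ x, avgF F w x ∂(μ : Measure X) = ∫ x, w x ∂(μ : Measure X) := by
    unfold avgF
    rw [integral_div, integral_finsetSum (f := fun s x => w (s • x)) _ htr]
    rw [Finset.sum_congr rfl (fun s _ => integral_smul_inv hM s w), Finset.sum_const, nsmul_eq_mul]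
    field_simp
  simp_rw [← hw]
  rw [← hIntg]
  exact integral_mono (cint ((A - ContinuousMap.const X c) ^ 2) μ)
    (cint ⟨avgF F w, avgF_continuous F w⟩ μ) hpt

theorem mean_ergodic_unif [Countable G] (hcpt : IsCompact (EG G X)) (h : C(X, ℝ)) (η : ℝ)
    (hη : 0 < η) : ∃ (L : Finset G) (γ : ℝ), 0 < γ ∧ ∀ F : Finset G, F.Nonempty →
      FolnerInv G L γ F → ∀ μ ∈ EG G X,
      ∫ x, (avgF F h x - ∫ y, h y ∂(μ : Measure X)) ^ 2 ∂(μ : Measure X) ≤ η := by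
  classical
  have key : ∃ (L : Finset G) (γ : ℝ), 0 < γ ∧ ∀ F : Finset G, F.Nonempty →
      FolnerInv G L γ F → ∀ μ ∈ EG G X, μ ∈ EG G X →
      ∫ x, (avgF F h x - ∫ y, h y ∂(μ : Measure X)) ^ 2 ∂(μ : Measure X) ≤ η := by
    refine IsCompact.induction_on (p := fun Z : Set (ProbabilityMeasure X) =>
      ∃ (L : Finset G) (γ : ℝ), 0 < γ ∧ ∀ F : Finset G, F.Nonempty →
      FolnerInv G L γ F → ∀ μ ∈ Z, μ ∈ EG G X →
      ∫ x, (avgF F h x - ∫ y, h y ∂(μ : Measure X)) ^ 2 ∂(μ : Measure X) ≤ η) hcpt ?_ ?_ ?_ ?_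
    · exact ⟨∅, 1, one_pos, fun _ _ _ μ hμ => absurd hμ (notMem_empty _)⟩
    · rintro s t hst ⟨L, γ, hγ, H⟩
      exact ⟨L, γ, hγ, fun F hF hFi μ hμ => H F hF hFi μ (hst hμ)⟩
    · rintro s t ⟨L, γ, hγ, H⟩ ⟨L', γ', hγ', H'⟩
      refine ⟨L ∪ L', min γ γ', lt_min hγ hγ', fun F hF hFi μ hμ hμ2 => ?_⟩
      rcases hμ with hμ | hμ
      · exact H F hF (folner_mono Finset.subset_union_left (min_le_left _ _) hFi) μ hμ hμ2
      · exact H' F hF (folner_mono Finset.subset_union_right (min_le_right _ _) hFi) μ hμ hμ2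
    · intro μ hμ
      obtain ⟨u, hu, hlt⟩ := mean_ergodic hμ h (η / 4) (by positivity)
      have hβ : 0 < Real.sqrt (η / 4) := Real.sqrt_pos.2 (by positivity)
      obtain ⟨L, γ, hγ, H⟩ := hu.1 (Real.sqrt (η / 4)) hβ
      have hcont : Continuous fun ν : ProbabilityMeasure X =>
          ∫ x, (u x - ∫ y, h y ∂(ν : Measure X)) ^ 2 ∂(ν : Measure X) := by
        have e : (fun ν : ProbabilityMeasure X =>
          ∫ x, (u x - ∫ y, h y ∂(ν : Measure X)) ^ 2 ∂(ν : Measure X)) = fun ν =>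
            evalMap ν (u ^ 2) - 2 * evalMap ν h * evalMap ν u + (evalMap ν h) ^ 2 := by
          funext ν
          change ∫ x, (u x - evalMap ν h) ^ 2 ∂(ν : Measure X) = _
          have i1 := cint (u ^ 2) ν
          have i2 := (cint u ν).const_mul (2 * evalMap ν h)
          have : ∀ x, (u x - evalMap ν h) ^ 2 =
              (u ^ 2) x - 2 * evalMap ν h * u x + (evalMap ν h) ^ 2 := fun x => by
            rw [ContinuousMap.pow_apply]; ring
          simp_rw [this]
          rw [integral_add (f := fun x => (u ^ 2) x - 2 * evalMap ν h * u x) (i1.sub i2)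
            (integrable_const _), integral_sub i1 i2, integral_const_mul]
          simp [evalMap]
        rw [e]
        have c1 : ∀ f : C(X, ℝ), Continuous fun ν : ProbabilityMeasure X => evalMap ν f := fun f =>
          ProbabilityMeasure.continuous_integral_continuousMap f
        have := c1 h
        have := c1 u
        have := c1 (u ^ 2)
        fun_prop
      refine ⟨{ν | ∫ x, (u x - ∫ y, h y ∂(ν : Measure X)) ^ 2 ∂(ν : Measure X) < η / 4},
        mem_nhdsWithin_of_mem_nhds (hcont.continuousAt.eventually_lt continuousAt_const hlt),
        L, γ, hγ, fun F hF hFi ν hν hνE => ?_⟩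
      have hν' : ∫ x, (u x - ∫ y, h y ∂(ν : Measure X)) ^ 2 ∂(ν : Measure X) < η / 4 := hν
      obtain ⟨c, hc⟩ : ∃ c, c = ∫ y, h y ∂(ν : Measure X) := ⟨_, rfl⟩
      rw [← hc] at hν' ⊢
      have h1 := avg_sq_le hνE.1 u c F hF
      let A : C(X, ℝ) := ⟨avgF F u, avgF_continuous F u⟩
      let B : C(X, ℝ) := ⟨avgF F h, avgF_continuous F h⟩
      have hpt : ∀ x, (avgF F h x - c) ^ 2 ≤ η / 2 + 2 * (avgF F u x - c) ^ 2 := by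
        intro x
        have h2 := H F hF hFi x
        have h3 : (avgF F u x - avgF F h x) ^ 2 ≤ η / 4 := by
          rw [← Real.sq_sqrt (show 0 ≤ η / 4 by positivity)]
          exact sq_le_sq' (abs_le.1 h2).1 (abs_le.1 h2).2
        nlinarith [sq_nonneg ((avgF F u x - c) + (avgF F u x - avgF F h x))]
      have i1 : Integrable (fun x => (avgF F u x - c) ^ 2) (ν : Measure X) :=
        cint ((A - ContinuousMap.const X c) ^ 2) ν
      have h4 : ∫ x, (avgF F h x - c) ^ 2 ∂(ν : Measure X) ≤
          ∫ x, (η / 2 + 2 * (avgF F u x - c) ^ 2) ∂(ν : Measure X) :=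
        integral_mono (cint ((B - ContinuousMap.const X c) ^ 2) ν)
          ((integrable_const _).add (i1.const_mul 2)) hpt
      rw [integral_add (integrable_const _) (i1.const_mul 2), integral_const_mul] at h4
      simp only [integral_const, probReal_univ, one_smul] at h4
      linarith
  obtain ⟨L, γ, hγ, H⟩ := key
  exact ⟨L, γ, hγ, fun F hF hFi μ hμ => H F hF hFi μ hμ hμ⟩

theorem mean_ergodic_fin [Countable G] (hG : AmenableGroup G) (hcpt : IsCompact (EG G X))
    (H : Finset C(X, ℝ)) (η : ℝ) (hη : 0 < η) : ∃ F : Finset G, F.Nonempty ∧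
      ∀ h ∈ H, ∀ μ ∈ EG G X,
      ∫ x, (avgF F h x - ∫ y, h y ∂(μ : Measure X)) ^ 2 ∂(μ : Measure X) ≤ η := by
  classical
  suffices hs : ∃ (L : Finset G) (γ : ℝ), 0 < γ ∧ ∀ F : Finset G, F.Nonempty →
      FolnerInv G L γ F → ∀ h ∈ H, ∀ μ ∈ EG G X,
      ∫ x, (avgF F h x - ∫ y, h y ∂(μ : Measure X)) ^ 2 ∂(μ : Measure X) ≤ η by
    obtain ⟨L, γ, hγ, h1⟩ := hs
    obtain ⟨F, hF, hFi⟩ := hG L γ hγ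
    exact ⟨F, hF, h1 F hF hFi⟩
  induction H using Finset.induction_on with
  | empty => exact ⟨∅, 1, one_pos, fun _ _ _ h hh => absurd hh (Finset.notMem_empty _)⟩
  | insert h0 H _ ih =>
    obtain ⟨L, γ, hγ, h1⟩ := ih
    obtain ⟨L', γ', hγ', h2⟩ := mean_ergodic_unif hcpt h0 η hη
    refine ⟨L ∪ L', min γ γ', lt_min hγ hγ', fun F hF hFi h hh => ?_⟩
    rcases Finset.mem_insert.1 hh with rfl | hh
    · exact h2 F hF (folner_mono Finset.subset_union_right (min_le_right _ _) hFi)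
    · exact h1 F hF (folner_mono Finset.subset_union_left (min_le_left _ _) hFi) h hh

end Part6

open MeasureTheory Set Pointwise

section Part7
set_option linter.unusedSectionVars false

variable {G X : Type*} [Group G] [MetricSpace X] [MeasurableSpace X] [MulAction G X]
  [BorelSpace X] [ContinuousConstSMul G X] [CompactSpace X]

theorem sep_functions (Z : Set (ProbabilityMeasure X × ProbabilityMeasure X)) (hZ : IsCompact Z)
    (hd : ∀ p ∈ Z, p.1 ≠ p.2) : ∃ (H : Finset C(X, ℝ)) (r : ℝ), 0 < r ∧ ∀ p ∈ Z, ∃ h ∈ H,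
      r ≤ |evalMap p.1 h - evalMap p.2 h| := by
  classical
  refine IsCompact.induction_on (p := fun Z => ∃ (H : Finset C(X, ℝ)) (r : ℝ), 0 < r ∧
    ∀ p ∈ Z, ∃ h ∈ H, r ≤ |evalMap p.1 h - evalMap p.2 h|) hZ ?_ ?_ ?_ ?_
  · exact ⟨∅, 1, one_pos, fun p hp => absurd hp (notMem_empty _)⟩
  · rintro s t hst ⟨H, r, hr, h1⟩
    exact ⟨H, r, hr, fun p hp => h1 p (hst hp)⟩
  · rintro s t ⟨H, r, hr, h1⟩ ⟨H', r', hr', h1'⟩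
    refine ⟨H ∪ H', min r r', lt_min hr hr', fun p hp => ?_⟩
    rcases hp with hp | hp
    · obtain ⟨h, hh, h2⟩ := h1 p hp
      exact ⟨h, Finset.mem_union_left _ hh, (min_le_left _ _).trans h2⟩
    · obtain ⟨h, hh, h2⟩ := h1' p hp
      exact ⟨h, Finset.mem_union_right _ hh, (min_le_right _ _).trans h2⟩
  · intro p hp
    have hne : evalMap p.1 ≠ evalMap p.2 := fun e => hd p hp (evalMap_injective e)
    obtain ⟨h, hh⟩ := Function.ne_iff.1 hne
    have hpos : 0 < |evalMap p.1 h - evalMap p.2 h| := abs_pos.2 (sub_ne_zero.2 hh)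
    have hcont : Continuous fun q : ProbabilityMeasure X × ProbabilityMeasure X =>
        |evalMap q.1 h - evalMap q.2 h| := by
      have c1 : Continuous fun ν : ProbabilityMeasure X => evalMap ν h :=
        ProbabilityMeasure.continuous_integral_continuousMap h
      exact ((c1.comp continuous_fst).sub (c1.comp continuous_snd)).abs
    refine ⟨{q | |evalMap p.1 h - evalMap p.2 h| / 2 < |evalMap q.1 h - evalMap q.2 h|},
      mem_nhdsWithin_of_mem_nhds (continuousAt_const.eventually_lt hcont.continuousAt
        (half_lt_self hpos)), {h}, _, half_pos hpos, fun q hq => ⟨h, Finset.mem_singleton_self _,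
        le_of_lt hq⟩⟩

theorem separation [Countable G] (hG : AmenableGroup G) (hcpt : IsCompact (EG G X))
    {κ ρ : Type*} [Finite κ] (C : κ → Set (ProbabilityMeasure X)) (col : κ → ρ)
    (hC : ∀ a, IsCompact (C a)) (hCE : ∀ a, C a ⊆ EG G X)
    (hdis : ∀ a b, a ≠ b → col a = col b → Disjoint (C a) (C b)) (η : ℝ) (hη : 0 < η) :
    ∃ A : κ → Set X, (∀ a, IsOpen (A a)) ∧
      (∀ a b, a ≠ b → col a = col b → Disjoint (closure (A a)) (closure (A b))) ∧
      ∀ a, ∀ μ ∈ C a, (μ : Measure X).real (A a)ᶜ ≤ η := by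
  classical
  obtain ⟨H, r4, hr4, hsep⟩ := sep_functions
    (⋃ a, ⋃ b, ⋃ (_ : a ≠ b ∧ col a = col b), C a ×ˢ C b)
    (by
      refine isCompact_iUnion fun a => isCompact_iUnion fun b => isCompact_iUnion fun _ =>
        (hC a).prod (hC b))
    (by
      intro p hp
      simp only [mem_iUnion] at hp
      obtain ⟨a, b, ⟨hab, hcol⟩, h1, h2⟩ := hp
      exact (hdis a b hab hcol).ne_of_mem h1 h2)
  obtain ⟨r, hr⟩ : ∃ r, r = r4 / 4 := ⟨_, rfl⟩
  have hr0 : 0 < r := by rw [hr]; positivity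
  have hη1 : 0 < η * r ^ 2 / (H.card + 1) := by positivity
  obtain ⟨F, hF, hFH⟩ := mean_ergodic_fin hG hcpt H _ hη1
  refine ⟨fun a => ⋃ μ ∈ C a, ⋂ h ∈ H, {x | |avgF F h x - evalMap μ h| < r}, ?_, ?_, ?_⟩
  · intro a
    refine isOpen_biUnion fun μ _ => isOpen_biInter_finset fun h _ => ?_
    exact isOpen_lt ((avgF_continuous F h).sub continuous_const).abs continuous_const
  · intro a b hab hcol
    rw [Set.disjoint_left]
    intro x hxa hxb
    set W : Set X := ⋂ h ∈ H, {y | |avgF F h y - avgF F h x| < r / 2} with hW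
    have hWo : IsOpen W := isOpen_biInter_finset fun h _ =>
      isOpen_lt ((avgF_continuous F h).sub continuous_const).abs continuous_const
    have hxW : x ∈ W := by
      simp only [W, mem_iInter, mem_ofPred_eq, sub_self, abs_zero]
      intro _ _; positivity
    obtain ⟨y, hyW, hya⟩ := mem_closure_iff.1 hxa W hWo hxW
    obtain ⟨z, hzW, hzb⟩ := mem_closure_iff.1 hxb W hWo hxW
    simp only [mem_iUnion, mem_iInter, mem_ofPred_eq, W] at hyW hzW hya hzb
    obtain ⟨μ, hμ, h1⟩ := hya
    obtain ⟨ν, hν, h2⟩ := hzb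
    obtain ⟨h, hh, h3⟩ := hsep (μ, ν) (by
      simp only [mem_iUnion]; exact ⟨a, b, ⟨hab, hcol⟩, hμ, hν⟩)
    have q1 := abs_lt.1 (h1 h hh)
    have q2 := abs_lt.1 (h2 h hh)
    have q3 := abs_lt.1 (hyW h hh)
    have q4 := abs_lt.1 (hzW h hh)
    have : |evalMap μ h - evalMap ν h| < r4 := by
      rw [abs_lt]; constructor <;> linarith [q1.1, q1.2, q2.1, q2.2, q3.1, q3.2, q4.1, q4.2]
    exact absurd h3 (not_le.2 this)
  · intro a μ hμ
    have hsub : (⋃ μ ∈ C a, ⋂ h ∈ H, {x | |avgF F h x - evalMap μ h| < r})ᶜ ⊆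
        ⋃ h ∈ H, {x | r ^ 2 ≤ (avgF F h x - evalMap μ h) ^ 2} := by
      intro x hx
      by_contra hcon
      apply hx
      simp only [mem_iUnion, mem_ofPred_eq, not_exists, not_le, mem_iInter] at hcon ⊢
      exact ⟨μ, hμ, fun h hh => abs_lt_of_sq_lt_sq (hcon h hh) hr0.le⟩
    refine (measureReal_mono hsub (measure_ne_top _ _)).trans ?_
    refine (measureReal_biUnion_finset_le _ _).trans ?_
    have hbd : ∀ h ∈ H, (μ : Measure X).real {x | r ^ 2 ≤ (avgF F h x - evalMap μ h) ^ 2} ≤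
        η / (H.card + 1) := by
      intro h hh
      let A : C(X, ℝ) := ⟨avgF F h, avgF_continuous F h⟩
      have h1 := mul_meas_ge_le_integral_of_nonneg (μ := (μ : Measure X))
        (f := fun x => (avgF F h x - evalMap μ h) ^ 2) (Filter.Eventually.of_forall
          fun x => sq_nonneg _) (cint ((A - ContinuousMap.const X (evalMap μ h)) ^ 2) μ) (r ^ 2)
      have h2 := hFH h hh μ (hCE a hμ)
      have h3 := h1.trans h2
      have h4 : η * r ^ 2 / (H.card + 1) = r ^ 2 * (η / (H.card + 1)) := by ring
      rw [h4] at h3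
      exact le_of_mul_le_mul_left h3 (by positivity)
    refine (Finset.sum_le_card_nsmul _ _ _ hbd).trans ?_
    rw [nsmul_eq_mul, mul_div_assoc', div_le_iff₀ (by positivity)]
    nlinarith

end Part7

open MeasureTheory Set Pointwise

section Part8

theorem coloring {Y : Type*} [TopologicalSpace Y] [CompactSpace Y] [T2Space Y] (m : ℕ)
    (hdim : CovDimLE Y m) (n : ℕ) (U : Fin n → Set Y) (hU : ∀ i, IsOpen (U i))
    (hcov : (⋃ i, U i) = Set.univ) :
    ∃ (κ : Type) (_ : Fintype κ) (C : κ → Set Y) (col : κ → Fin (m + 1)),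
      (∀ a, IsClosed (C a)) ∧ (⋃ a, C a) = Set.univ ∧ (∀ a, ∃ i, C a ⊆ U i) ∧
      ∀ a b, a ≠ b → col a = col b → Disjoint (C a) (C b) := by
  classical
  obtain ⟨k, W, hWo, hWc, hWU, hWm⟩ := hdim n U hU hcov
  obtain ⟨D, hDc, hDcl, hDW⟩ := exists_iUnion_eq_closed_subset hWo (fun _ => Set.toFinite _) hWc
  have hφ : ∀ j, ∃ f : C(Y, ℝ), EqOn f 0 (W j)ᶜ ∧ EqOn f 1 (D j) ∧ ∀ x, f x ∈ Icc (0 : ℝ) 1 := by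
    intro j
    exact exists_continuous_zero_one_of_isClosed (hWo j).isClosed_compl (hDcl j)
      (Set.disjoint_left.2 fun x hx hx' => hx (hDW j hx'))
  choose φ h0 h1 h01 using hφ
  let κ : Type := {σ : Finset (Fin k) // σ.Nonempty ∧ σ.card ≤ m + 1}
  let O : κ → Set Y := fun σ => ⋂ j ∈ σ.1, ({y | 0 < φ j y} ∩ ⋂ l : Fin k, {y | l ∉ σ.1 → φ l y < φ j y})
  have hOm : ∀ (σ : κ) y, y ∈ O σ ↔ ∀ j ∈ σ.1, 0 < φ j y ∧ ∀ l, l ∉ σ.1 → φ l y < φ j y := by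
    intro σ y
    simp only [O, mem_iInter, mem_inter_iff, mem_ofPred_eq]
  have hOo : ∀ σ, IsOpen (O σ) := by
    intro σ
    refine isOpen_biInter_finset fun j _ => ?_
    refine (isOpen_lt continuous_const (φ j).continuous).inter (isOpen_iInter_of_finite fun l => ?_)
    by_cases hl : l ∈ σ.1
    · simp [hl]
    · simp only [hl, not_false_eq_true, forall_const]
      exact isOpen_lt (φ l).continuous (φ j).continuous
  have hsupp : ∀ j y, 0 < φ j y → y ∈ W j := by
    intro j y hy
    by_contra hc
    have := h0 j hc
    simp only [Pi.zero_apply] at this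
    linarith
  have hOc : (⋃ σ, O σ) = Set.univ := by
    rw [eq_univ_iff_forall]
    intro y
    let σ : Finset (Fin k) := Finset.univ.filter fun j => 0 < φ j y
    have hne : σ.Nonempty := by
      have : y ∈ ⋃ j, D j := by rw [hDc]; trivial
      obtain ⟨j, hj⟩ := mem_iUnion.1 this
      refine ⟨j, ?_⟩
      have := h1 j hj
      simp only [σ, Finset.mem_filter, Finset.mem_univ, true_and]
      rw [this]; exact one_pos
    have hcard : σ.card ≤ m + 1 := by
      refine le_trans ?_ (hWm y)
      rw [← Set.ncard_coe_finset]
      refine Set.ncard_le_ncard ?_ (Set.toFinite _)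
      intro j hj
      exact hsupp j y (by simpa [σ] using hj)
    refine mem_iUnion.2 ⟨⟨σ, hne, hcard⟩, (hOm _ _).2 fun j hj => ?_⟩
    have hj' : 0 < φ j y := by simpa [σ] using hj
    refine ⟨hj', fun l hl => ?_⟩
    have : ¬ 0 < φ l y := by simpa [σ] using hl
    linarith
  obtain ⟨C, hCc, hCcl, hCO⟩ := exists_iUnion_eq_closed_subset hOo (fun _ => Set.toFinite _) hOc
  refine ⟨κ, inferInstance, C, fun σ => ⟨σ.1.card - 1, by have := σ.2.2; omega⟩, hCcl, hCc, ?_, ?_⟩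
  · intro σ
    obtain ⟨j, hj⟩ := σ.2.1
    obtain ⟨i, hi⟩ := hWU j
    refine ⟨i, fun y hy => hi (hsupp j y ?_)⟩
    exact ((hOm _ _).1 (hCO σ hy) j hj).1
  · intro σ τ hne hcol
    have hcard : σ.1.card = τ.1.card := by
      have h2 := Finset.card_pos.2 σ.2.1
      have h3 := Finset.card_pos.2 τ.2.1
      have h4 : σ.1.card - 1 = τ.1.card - 1 := by simpa using hcol
      omega
    rw [Set.disjoint_left]
    intro y hy hy'
    have a1 := (hOm _ _).1 (hCO σ hy)
    have a2 := (hOm _ _).1 (hCO τ hy')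
    have n1 : ¬ σ.1 ⊆ τ.1 := fun hs => hne (Subtype.ext (Finset.eq_of_subset_of_card_le hs hcard.ge))
    have n2 : ¬ τ.1 ⊆ σ.1 := fun hs =>
      hne (Subtype.ext (Finset.eq_of_subset_of_card_le hs hcard.le).symm)
    obtain ⟨j, hj, hj'⟩ := Finset.not_subset.1 n1
    obtain ⟨l, hl, hl'⟩ := Finset.not_subset.1 n2
    have := (a1 j hj).2 l hl'
    have := (a2 l hl).2 j hj'
    linarith

end Part8

open MeasureTheory Set Pointwise

section Part9
set_option linter.unusedSectionVars false

variable {G X : Type*} [Group G] [MetricSpace X] [MeasurableSpace X] [MulAction G X]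
  [BorelSpace X] [ContinuousConstSMul G X] [CompactSpace X]

theorem isOpen_cov {ι : Type} (S : ι → Finset G) (V : ι → Set X) (hV : ∀ i, IsOpen (V i)) :
    IsOpen (cov S V) :=
  isOpen_iUnion fun i => isOpen_biUnion fun s _ => (hV i).smul s

/-- the base cut down to the points whose tower orbit stays in `A` -/
def cutV {ι : Type} (S : ι → Finset G) (V : ι → Set X) (A : Set X) (i : ι) : Set X :=
  V i ∩ ⋂ s ∈ S i, (fun x => s • x) ⁻¹' A

theorem isOpen_cutV {ι : Type} (S : ι → Finset G) (V : ι → Set X) (A : Set X)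
    (hV : ∀ i, IsOpen (V i)) (hA : IsOpen A) (i : ι) : IsOpen (cutV S V A i) :=
  (hV i).inter (isOpen_biInter_finset fun s _ => hA.preimage (continuous_const_smul s))

theorem closure_cutV {ι : Type} (S : ι → Finset G) (V : ι → Set X) (A : Set X) (i : ι) :
    closure (cutV S V A i) ⊆ closure (V i) := closure_mono inter_subset_left

theorem smul_closure_cutV {ι : Type} (S : ι → Finset G) (V : ι → Set X) (A : Set X) (i : ι)
    (s : G) (hs : s ∈ S i) (x : X) (hx : x ∈ closure (cutV S V A i)) : s • x ∈ closure A := by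
  refine map_mem_closure (continuous_const_smul s) hx fun y hy => ?_
  have := hy.2
  simp only [mem_iInter] at this
  exact this s hs

theorem measure_cutV {ι : Type} [Fintype ι] (S : ι → Finset G) (V : ι → Set X) (A : Set X)
    (μ : ProbabilityMeasure X) (hμ : μ ∈ MG G X) :
    (μ : Measure X).real (cov S V) ≤ (μ : Measure X).real (cov S (cutV S V A)) +
      (∑ i, ((S i).card : ℝ) ^ 2) * (μ : Measure X).real Aᶜ := by
  have hsub : cov S V ⊆ cov S (cutV S V A) ∪
      ⋃ i, ⋃ s ∈ S i, ⋃ t ∈ S i, (s * t⁻¹) • Aᶜ := by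
    intro z hz
    obtain ⟨i, s, hs, x, hx, rfl⟩ := mem_cov.1 hz
    by_cases h : ∀ t ∈ S i, t • x ∈ A
    · left
      exact mem_cov.2 ⟨i, s, hs, x, ⟨hx, by simpa using h⟩, rfl⟩
    · right
      push Not at h
      obtain ⟨t, ht, hxt⟩ := h
      simp only [mem_iUnion]
      refine ⟨i, s, hs, t, ht, ?_⟩
      exact ⟨t • x, hxt, by simp [mul_smul]⟩
  refine (measureReal_mono hsub (measure_ne_top _ _)).trans ((measureReal_union_le _ _).trans ?_)
  gcongr
  refine (measureReal_iUnion_fintype_le _).trans ?_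
  rw [Finset.sum_mul]
  refine Finset.sum_le_sum fun i _ => ?_
  refine (measureReal_biUnion_finset_le _ _).trans ?_
  refine (Finset.sum_le_card_nsmul _ _ ((S i).card * (μ : Measure X).real Aᶜ) fun s _ => ?_).trans ?_
  · refine (measureReal_biUnion_finset_le _ _).trans ?_
    refine (Finset.sum_le_card_nsmul _ _ ((μ : Measure X).real Aᶜ) fun t _ => ?_).trans ?_
    · rw [inv_smul_real hμ]
    · rw [nsmul_eq_mul]
  · rw [nsmul_eq_mul]
    apply le_of_eq; ring

theorem color_bound {J : Type} [Fintype J] (m n : ℕ) (S S' : J → Finset G) (V : J → Set X)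
    (c : J → Fin (m + 1)) (hV : ∀ j, MeasurableSet (V j)) (hS : ∀ j, S' j ⊆ S j)
    (hcard : ∀ j, (S j).card ≤ 2 * n * (S' j).card)
    (hc : ∀ i j, c i = c j → ∀ s ∈ S i, ∀ t ∈ S j, ∀ x ∈ V i, ∀ y ∈ V j, s • x = t • y →
      i = j ∧ s = t) (μ : ProbabilityMeasure X) (hμ : μ ∈ MG G X) :
    (μ : Measure X).real (cov S V) ≤ 2 * n * (m + 1) * (μ : Measure X).real (cov S' V) := by
  classical
  let Sc : ∀ b : Fin (m + 1), {j // c j = b} → Finset G := fun b j => S j.1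
  let Sc' : ∀ b : Fin (m + 1), {j // c j = b} → Finset G := fun b j => S' j.1
  let Vc : ∀ b : Fin (m + 1), {j // c j = b} → Set X := fun b j => V j.1
  have h1 : cov S V ⊆ ⋃ b, cov (Sc b) (Vc b) := by
    intro z hz
    obtain ⟨i, s, hs, x, hx, rfl⟩ := mem_cov.1 hz
    exact mem_iUnion.2 ⟨c i, mem_cov.2 ⟨⟨i, rfl⟩, s, hs, x, hx, rfl⟩⟩
  have h2 : ∀ b, (μ : Measure X).real (cov (Sc b) (Vc b)) ≤
      2 * n * (μ : Measure X).real (cov S' V) := by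
    intro b
    have c1 : Castle (Sc b) (Vc b) := by
      intro i j s hs t ht x hx y hy hxy
      obtain ⟨e1, e2⟩ := hc i.1 j.1 (i.2.trans j.2.symm) s hs t ht x hx y hy hxy
      exact ⟨Subtype.ext e1, e2⟩
    have c2 : Castle (Sc' b) (Vc b) := fun i j s hs t ht x hx y hy hxy =>
      c1 i j s (hS _ hs) t (hS _ ht) x hx y hy hxy
    have h3 : (μ : Measure X).real (cov (Sc' b) (Vc b)) ≤ (μ : Measure X).real (cov S' V) := by
      refine measureReal_mono ?_ (measure_ne_top _ _)
      intro z hz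
      obtain ⟨i, s, hs, x, hx, rfl⟩ := mem_cov.1 hz
      exact mem_cov.2 ⟨i.1, s, hs, x, hx, rfl⟩
    refine le_trans ?_ (mul_le_mul_of_nonneg_left h3 (by positivity))
    have hVc : ∀ j, MeasurableSet (Vc b j) := fun j => hV j.1
    rw [measure_cov hVc c1 hμ, measure_cov hVc c2 hμ, Finset.mul_sum]
    refine Finset.sum_le_sum fun j _ => ?_
    rw [← mul_assoc]
    refine mul_le_mul_of_nonneg_right ?_ measureReal_nonneg
    exact_mod_cast hcard j.1
  refine (measureReal_mono h1 (measure_ne_top _ _)).trans ?_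
  refine (measureReal_iUnion_fintype_le _).trans ?_
  refine (Finset.sum_le_card_nsmul _ _ _ fun b _ => h2 b).trans ?_
  rw [nsmul_eq_mul, Finset.card_univ, Fintype.card_fin]
  push_cast
  apply le_of_eq; ring

theorem cov_eq {ι : Type} (S : ι → Finset G) (V : ι → Set X) :
    cov S V = ⋃ i, (S i : Set G) • V i := by
  ext z
  rw [mem_cov]
  simp only [mem_iUnion, Set.mem_smul, Finset.mem_coe]

theorem finish {J : Type} [Fintype J] (m n : ℕ) (K : Finset G) (δ : ℝ)
    (S S' : J → Finset G) (V : J → Set X) (c : J → Fin (m + 1))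
    (h1 : ∀ j, IsOpen (V j)) (h3 : ∀ j, FolnerInv G K δ (S j))
    (h4 : ∀ i, ∀ s ∈ S i, Metric.diam (s • closure (V i)) < δ)
    (h5 : ∀ i j, c i = c j → ∀ s ∈ S i, ∀ t ∈ S j, ∀ x ∈ closure (V i), ∀ y ∈ closure (V j),
      s • x = t • y → i = j ∧ s = t)
    (h6 : ∀ i, S' i ⊆ S i) (h7 : ∀ i, ((S' i).card : ℝ) ≤ (S i).card / n)
    (h8 : SubordinateM G X 0 (Set.univ \ cov S V) (cov S' V)) :
    ∃ (I : ℕ) (S : Fin I → Finset G) (V : Fin I → Set X) (c : Fin I → Fin (m + 1))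
      (S' : Fin I → Finset G),
      (∀ i, IsOpen (V i)) ∧
      (∀ i, IsTower G X (S i) (closure (V i))) ∧
      (∀ i, FolnerInv G K δ (S i)) ∧
      (∀ i, ∀ s ∈ S i, Metric.diam (s • closure (V i)) < δ) ∧
      (∀ i j, i ≠ j → c i = c j →
        Disjoint ((S i : Set G) • closure (V i)) ((S j : Set G) • closure (V j))) ∧
      (∀ i, S' i ⊆ S i) ∧ (∀ i, ((S' i).card : ℝ) ≤ (S i).card / n) ∧
      SubordinateM G X 0 (Set.univ \ ⋃ i, (S i : Set G) • V i) (⋃ i, (S' i : Set G) • V i) := by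
  let e := (Fintype.equivFin J).symm
  refine ⟨Fintype.card J, fun i => S (e i), fun i => V (e i), fun i => c (e i), fun i => S' (e i),
    fun i => h1 _, ?_, fun i => h3 _, fun i => h4 _, ?_, fun i => h6 _, fun i => h7 _, ?_⟩
  · intro i s hs t ht hst
    rw [Set.disjoint_left]
    rintro _ ⟨x, hx, rfl⟩ ⟨y, hy, hxy⟩
    exact hst (h5 _ _ rfl s hs t ht x hx y hy hxy.symm).2
  · intro i j hij hc
    rw [Set.disjoint_left]
    intro z hz hz'
    obtain ⟨s, hs, x, hx, rfl⟩ := Set.mem_smul.1 hz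
    obtain ⟨t, ht, y, hy, hxy⟩ := Set.mem_smul.1 hz'
    exact hij (e.injective (h5 _ _ hc s hs t ht x hx y hy hxy.symm).1)
  · rw [e.surjective.iUnion_comp (fun j => (S j : Set G) • V j),
      e.surjective.iUnion_comp (fun j => (S' j : Set G) • V j), ← cov_eq, ← cov_eq]
    exact h8

end Part9

open MeasureTheory Set Pointwise

/-- If `E_G(X)` is compact of covering dimension at most `m` in the weak*
topology and the minimal free action has dynamical comparison, then it is `m`-almost finite. -/
theorem mAlmostFinite_of_comparison_of_covDim
    {G X : Type*} [Group G] [Countable G] [Infinite G]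
    [MetricSpace X] [CompactSpace X] [Infinite X]
    [MeasurableSpace X] [BorelSpace X]
    [MulAction G X] [ContinuousConstSMul G X]
    (hG : AmenableGroup G)
    (hfree : FreeAction G X) (hmin : MinimalAction G X)
    (m : ℕ)
    (hcpt : IsCompact (EG G X)) (hdim : CovDimLE (EG G X) m)
    (hcomp : HasMComparison G X 0) :
    MAlmostFinite G X m := by
  classical
  intro n hn K δ hδ
  have hn0 : (0 : ℝ) < n := by exact_mod_cast hn
  have hn1 : (1 : ℝ) ≤ n := by exact_mod_cast hn
  have hm0 : (0 : ℝ) ≤ m := by positivity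
  obtain ⟨Q, hQ⟩ : ∃ Q : ℝ, Q = 2 * n * (m + 1) := ⟨_, rfl⟩
  have hQ2 : 2 ≤ Q := by rw [hQ]; nlinarith
  obtain ⟨ε, hε⟩ : ∃ ε : ℝ, ε = 1 / (4 * Q) := ⟨_, rfl⟩
  have hε0 : 0 < ε := by rw [hε]; positivity
  have hεQ : ε * Q = 1 / 4 := by rw [hε]; field_simp
  have : CompactSpace (EG G X) := isCompact_iff_compactSpace.1 hcpt
  have hcast : ∀ y : EG G X, ∃ (ι : Type) (_ : Fintype ι) (S : ι → Finset G) (V : ι → Set X),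
      GoodCastle K δ n S V ∧ 1 - ε < ((y.1 : ProbabilityMeasure X) : Measure X).real (cov S V) :=
    fun y => openCastle hG hfree K δ hδ n ε hε0 y.1 y.2.1
  choose ι hfin S0 V0 hgood hmeas using hcast
  let N : EG G X → Set (EG G X) := fun y =>
    {ν | 1 - ε < ((ν.1 : ProbabilityMeasure X) : Measure X).real (cov (S0 y) (V0 y))}
  have hNo : ∀ y, IsOpen (N y) := by
    intro y
    rw [isOpen_iff_mem_nhds]
    intro ν hν
    exact continuous_subtype_val.continuousAt.eventually
      (eventually_open ν.1 _ (isOpen_cov _ _ (hgood y).1) _ hν)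
  obtain ⟨t, ht⟩ := CompactSpace.elim_nhds_subcover N fun y => (hNo y).mem_nhds (hmeas y)
  obtain ⟨κ, _, C, col, hCcl, hCcov, hCU, hCd⟩ := coloring m hdim t.card
    (fun i => N (t.equivFin.symm i).1) (fun i => hNo _) (by
      rw [eq_univ_iff_forall]
      intro ν
      have : ν ∈ ⋃ x ∈ t, N x := by rw [ht]; trivial
      simp only [mem_iUnion] at this ⊢
      obtain ⟨y, hy, hyν⟩ := this
      exact ⟨t.equivFin ⟨y, hy⟩, by simpa using hyν⟩)
  choose idx hidx using hCU
  obtain ⟨p, hp⟩ : ∃ p : κ → EG G X, ∀ a, C a ⊆ N (p a) :=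
    ⟨fun a => (t.equivFin.symm (idx a)).1, hidx⟩
  obtain ⟨M, hM⟩ : ∃ M : κ → ℝ, ∀ a, M a = ∑ i, ((S0 (p a) i).card : ℝ) ^ 2 := ⟨_, fun a => rfl⟩
  have hM0 : ∀ a, 0 ≤ M a := fun a => by rw [hM]; exact Finset.sum_nonneg fun i _ => sq_nonneg _
  obtain ⟨B, hB⟩ : ∃ B : ℝ, B = ∑ a, M a := ⟨_, rfl⟩
  have hMB : ∀ a, M a ≤ B := fun a => by
    rw [hB]; exact Finset.single_le_sum (fun b _ => hM0 b) (Finset.mem_univ a)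
  have hB0 : 0 ≤ B := by rw [hB]; exact Finset.sum_nonneg fun a _ => hM0 a
  obtain ⟨A, hAo, hAd, hAm⟩ := separation hG hcpt (fun a => Subtype.val '' C a) col
    (fun a => (hCcl a).isCompact.image continuous_subtype_val)
    (by rintro a _ ⟨y, _, rfl⟩; exact y.2)
    (fun a b hab hc => (Set.disjoint_image_iff Subtype.val_injective).2 (hCd a b hab hc))
    (ε / (B + 1)) (by positivity)
  let J : Type := Σ a : κ, ι (p a)
  let S : J → Finset G := fun j => S0 (p j.1) j.2
  let V : J → Set X := fun j => cutV (S0 (p j.1)) (V0 (p j.1)) (A j.1) j.2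
  let c : J → Fin (m + 1) := fun j => col j.1
  have hJ : Fintype J := inferInstanceAs (Fintype (Σ a : κ, ι (p a)))
  have hVo : ∀ j, IsOpen (V j) := fun j => isOpen_cutV _ _ _ (hgood _).1 (hAo _) _
  have hcas : ∀ i j, c i = c j → ∀ s ∈ S i, ∀ t ∈ S j, ∀ x ∈ closure (V i), ∀ y ∈ closure (V j),
      s • x = t • y → i = j ∧ s = t := by
    rintro ⟨a, i⟩ ⟨b, j⟩ hc s hs t ht x hx y hy hxy
    have k1 := smul_closure_cutV (S0 (p a)) (V0 (p a)) (A a) i s hs x hx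
    have k2 := smul_closure_cutV (S0 (p b)) (V0 (p b)) (A b) j t ht y hy
    have hab : a = b := by
      by_contra hab
      rw [hxy] at k1
      exact Set.disjoint_left.1 (hAd a b hab hc) k1 k2
    subst hab
    obtain ⟨e1, e2⟩ := (hgood (p a)).2.1 i j s hs t ht x (closure_cutV _ _ _ _ hx) y
      (closure_cutV _ _ _ _ hy) hxy
    subst e1
    exact ⟨rfl, e2⟩
  have hS' : ∀ j, ∃ T ⊆ S j, T.card = (S j).card / n := fun j =>
    Finset.exists_subset_card_eq (Nat.div_le_self _ _)
  choose S' hS'S hS'c using hS'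
  have hbig : ∀ j, (S j).card ≤ 2 * n * (S' j).card := by
    intro j
    rw [hS'c]
    have h1 : n ≤ (S j).card := ((hgood _).2.2.1 _).2
    have h2 : 1 ≤ (S j).card / n := (Nat.one_le_div_iff hn).2 h1
    have h3 := Nat.div_add_mod (S j).card n
    have h4 := Nat.mod_lt (S j).card hn
    have h5 : n * 1 ≤ n * ((S j).card / n) := Nat.mul_le_mul_left n h2
    have h6 : 2 * n * ((S j).card / n) = n * ((S j).card / n) + n * ((S j).card / n) := by ring
    omega
  have hcovE : ∀ μ ∈ EG G X, 1 - 2 * ε ≤ (μ : Measure X).real (cov S V) := by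
    intro μ hμ
    have : (⟨μ, hμ⟩ : EG G X) ∈ ⋃ a, C a := by rw [hCcov]; trivial
    obtain ⟨a, ha⟩ := mem_iUnion.1 this
    have q1 : 1 - ε < (μ : Measure X).real (cov (S0 (p a)) (V0 (p a))) := hp a ha
    have q2 := measure_cutV (S0 (p a)) (V0 (p a)) (A a) μ hμ.1
    have q3 := hAm a μ ⟨_, ha, rfl⟩
    rw [← hM] at q2
    have q4 : M a * (μ : Measure X).real (A a)ᶜ ≤ ε := by
      calc _ ≤ B * (ε / (B + 1)) := mul_le_mul (hMB a) q3 measureReal_nonneg hB0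
        _ ≤ ε := by
          rw [mul_div_assoc', div_le_iff₀ (by positivity)]
          nlinarith
    have q5 : (μ : Measure X).real (cov (S0 (p a)) (cutV (S0 (p a)) (V0 (p a)) (A a))) ≤
        (μ : Measure X).real (cov S V) := by
      refine measureReal_mono ?_ (measure_ne_top _ _)
      intro z hz
      obtain ⟨i, s, hs, x, hx, rfl⟩ := mem_cov.1 hz
      exact mem_cov.2 ⟨⟨a, i⟩, s, hs, x, hx, rfl⟩
    linarith
  have hcovo : IsOpen (cov S V) := isOpen_cov _ _ hVo
  have hFM : ∀ μ ∈ MG G X, (μ : Measure X).real (cov S V)ᶜ ≤ 2 * ε := by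
    intro μ hμ
    refine ergodic_bound _ hcovo.isClosed_compl _ (fun ν hν => ?_) μ hμ
    rw [probReal_compl_eq_one_sub hcovo.measurableSet]
    linarith [hcovE ν hν]
  refine finish m n K δ S S' V c hVo (fun j => ((hgood _).2.2.1 _).1) ?_ hcas hS'S ?_ ?_
  · intro j s hs
    refine lt_of_le_of_lt (Metric.diam_mono (Set.smul_set_mono (closure_cutV _ _ _ _)) ?_)
      ((hgood _).2.2.2 _ s hs)
    exact Metric.isBounded_of_compactSpace
  · intro j
    rw [hS'c]
    exact Nat.cast_div_le
  · refine hcomp _ _ ?_ (isOpen_cov _ _ hVo) ?_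
    · rw [← Set.compl_eq_univ_sdiff]; exact hcovo.isClosed_compl
    · intro μ hμ
      rw [← Set.compl_eq_univ_sdiff]
      have r1 := hFM μ hμ
      have r2 := color_bound m n S S' V c (fun j => (hVo j).measurableSet) hS'S hbig
        (fun i j hc s hs t ht x hx y hy hxy => hcas i j hc s hs t ht x (subset_closure hx) y
          (subset_closure hy) hxy) μ hμ
      rw [← hQ] at r2
      have r3 := probReal_compl_eq_one_sub (μ := (μ : Measure X)) hcovo.measurableSet
      have r4 : (μ : Measure X).real (cov S V)ᶜ < (μ : Measure X).real (cov S' V) := by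
        by_contra hcon
        have r5 : Q * (μ : Measure X).real (cov S' V) ≤ Q * (2 * ε) :=
          mul_le_mul_of_nonneg_left (by linarith) (by linarith)
        have r6 : ε * 2 ≤ ε * Q := mul_le_mul_of_nonneg_left hQ2 hε0.le
        linarith
      exact_mod_cast r4
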